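/- Let p_i, p_j, p_k be distinct odd primes and M = p_i^2 p_j^2 p_k^2. Assume A ⊕ B = ℤ_M, |A| = |B| = p_i p_j p_k, and Φ_M | A. Let Λ be a D(M)-grid such that every divisor m of M with D(M) | m belongs to Div(A ∩ Λ), A ∩ Λ is not M-fibered in any direction, and A contains diagonal boxes on Λ: a nonempty box P ⊆ Λ with nonempty complementary box P° and P ∪ P° ⊆ A. Suppose in addition that for some ν ∈ {i,j,k} the mixed box R_ν = {x ∈ Λ : x ∼_ν q for some q ∈ P°, and for each μ ∈ {i,j,k} ∖ {ν} there is p ∈ P with x ∼_μ p} is contained in A. Then Λ ⊕ B = ℤ_M is also a tiling, and both A and B satisfy (T2). -/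

import Mathlib

open Polynomial

/-- The mask polynomial `A(X) = Σ_{a ∈ A} X^a` of a finite subset of `ZMod M`,
using the representatives in `{0, …, M-1}`. -/
noncomputable def maskPoly (M : ℕ) (A : Finset (ZMod M)) : Polynomial ℤ :=
  ∑ a ∈ A, X ^ a.val

/-- `Φ_s | A` : the `s`-th cyclotomic polynomial divides the mask polynomial of `A` in `ℤ[X]`. -/
def cycDvd (M s : ℕ) (A : Finset (ZMod M)) : Prop :=
  cyclotomic s ℤ ∣ maskPoly M A

/-- `A ⊕ B = ℤ_M` : every element of `ℤ_M` has a unique representation `a + b`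
with `a ∈ A` and `b ∈ B`. -/
def IsTiling (M : ℕ) (A B : Set (ZMod M)) : Prop :=
  ∀ z : ZMod M, ∃! ab : ZMod M × ZMod M, ab.1 ∈ A ∧ ab.2 ∈ B ∧ ab.1 + ab.2 = z

/-- The Coven–Meyerowitz property (T2): whenever `s_1, …, s_m` are prime powers dividing `M`,
powers of pairwise distinct primes, with `Φ_{s_t} | A` for each `t`, then `Φ_{s_1 ⋯ s_m} | A`. -/
def SatisfiesT2 (M : ℕ) (A : Finset (ZMod M)) : Prop :=
  ∀ (P : Finset ℕ) (e : ℕ → ℕ), P.Nonempty →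
    (∀ p ∈ P, p.Prime ∧ 1 ≤ e p ∧ p ^ e p ∣ M ∧ cycDvd M (p ^ e p) A) →
    cycDvd M (∏ p ∈ P, p ^ e p) A

/-- The `D`-grid through `x` in `ZMod M` : `Λ(x, D) = {y : D ∣ y - x}`. -/
def gridSet (M : ℕ) (x : ZMod M) (D : ℕ) : Set (ZMod M) :=
  {y : ZMod M | (D : ZMod M) ∣ (y - x)}

/-- `S` is fibered in the `p` direction on scale `M`: every element of `S` has its whole
fiber `Λ(s, M/p)` contained in `S`. -/
def Fibered (M p : ℕ) (S : Set (ZMod M)) : Prop :=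
  ∀ s ∈ S, gridSet M s (M / p) ⊆ S

/-- `Div_N(S)` : the set of values `(s - s', N) = gcd(s - s', N)` for `s, s' ∈ S`. -/
def DivSet (M N : ℕ) (S : Set (ZMod M)) : Set ℕ :=
  {m : ℕ | ∃ s ∈ S, ∃ s' ∈ S, Nat.gcd (s - s').val N = m}

/-- `P` is a box in the grid `Λ`, with respect to the equivalences `x ∼_ν y ↔ q_ν ∣ x - y`
(`q_ν = p_ν^{n_ν}`). -/
def IsBox (M qi qj qk : ℕ) (Lam P : Set (ZMod M)) : Prop :=
  P ⊆ Lam ∧ ∀ u ∈ P, ∀ v ∈ P, ∀ w ∈ P, ∀ x ∈ Lam,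
    (qi : ZMod M) ∣ (x - u) → (qj : ZMod M) ∣ (x - v) → (qk : ZMod M) ∣ (x - w) → x ∈ P

/-- The complementary box `P°` of `P` in `Λ`. -/
def compBox (M qi qj qk : ℕ) (Lam P : Set (ZMod M)) : Set (ZMod M) :=
  {x : ZMod M | x ∈ Lam ∧ ∀ u ∈ P,
    ¬ (qi : ZMod M) ∣ (x - u) ∧ ¬ (qj : ZMod M) ∣ (x - u) ∧ ¬ (qk : ZMod M) ∣ (x - u)}

/-- The mixed box `R_ν`: points of `Λ` equivalent to an element of `P°` in the direction `ν`
(`q = q_ν`) and to elements of `P` in the two remaining directions (`r₁ = q_μ₁`,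
`r₂ = q_μ₂`). -/
def mixedBox (M q r1 r2 : ℕ) (Lam P Pc : Set (ZMod M)) : Set (ZMod M) :=
  {x : ZMod M | x ∈ Lam ∧ (∃ u ∈ Pc, (q : ZMod M) ∣ (x - u)) ∧
    (∃ v ∈ P, (r1 : ZMod M) ∣ (x - v)) ∧ (∃ w ∈ P, (r2 : ZMod M) ∣ (x - w))}

/-!
Write `M = ∏ pₘ²` and pass to the coordinates `∏ ℤ/pₘ²`, in which the `D(M)`-grids are the cosets
of the kernel of the reduction to `∏ ℤ/pₘ`. By a theorem of Sands and Tijdeman `rA ⊕ B` is a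
tiling for every unit `r`, so `A` and `B` share no divisor of `M` other than `M` itself; as `A`
takes up all multiples of `D(M)`, the elements of `B` are pairwise incongruent modulo `D(M)`, and
`B` is a complement of every `D(M)`-grid.

If `x ∉ A`, only the elements `z ∈ A` for which `(z - x, M)` is a divisor of `B` can cover `x + B`.
When these lie on a line through `x` in the direction `l`, an `M`-fiber of `A` on that line can be
exchanged for the one through `x`, and the result still tiles with `B`. As long as `A` does not
contain `Λ`, the diagonal boxes and the mixed box produce such a point `x ∈ Λ`, so finitely many
exchanges turn `A` into `Λ`. An exchange preserves the sum over `A` of each character of order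
`∏_{m ∈ S} pₘ²`, whence `Φ_s | A` for these orders `s`. Similarly `Φ_s | B` for squarefree `s`.
Since `|A| = |B| = ∏ pₘ`, no other prime powers can occur, and (T2) follows.
-/

section Tiling

variable {G : Type*} [AddCommGroup G]

/-- `A ⊕ B = G`, for finite subsets `A`, `B` of an additive group `G`. -/
def Tiles (A B : Finset G) : Prop := AddSubgroup.IsComplement (A : Set G) (B : Set G)

namespace Tiles

variable {A B : Finset G}

lemma exists_add_eq (h : Tiles A B) (z : G) : ∃ a ∈ A, ∃ b ∈ B, a + b = z := by
  obtain ⟨⟨⟨a, ha⟩, ⟨b, hb⟩⟩, hab⟩ := h.2 z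
  exact ⟨a, ha, b, hb, hab⟩

lemma eq_and_eq (h : Tiles A B) {a a' b b' : G} (ha : a ∈ A) (hb : b ∈ B) (ha' : a' ∈ A)
    (hb' : b' ∈ B) (hab : a + b = a' + b') : a = a' ∧ b = b' := by
  have := @h.1 (⟨a, ha⟩, ⟨b, hb⟩) (⟨a', ha'⟩, ⟨b', hb'⟩) hab
  simpa only [Prod.mk.injEq, Subtype.mk.injEq] using this

lemma sum_add {E : Type*} [AddCommMonoid E] [Fintype G] (h : Tiles A B) (f : G → E) :
    ∑ a ∈ A, ∑ b ∈ B, f (a + b) = ∑ z, f z := by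
  rw [← (Equiv.ofBijective _ h).sum_comp, Fintype.sum_prod_type,
    ← Finset.sum_coe_sort A]
  exact Finset.sum_congr rfl fun a _ => (Finset.sum_coe_sort B fun b => f (a + b)).symm

lemma card_mul_card (h : Tiles A B) : A.card * B.card = Nat.card G := by
  simpa using AddSubgroup.IsComplement.card_mul_card h

variable [Finite G]

lemma card_eq_card {A' : Finset G} (h : Tiles A B) (h' : Tiles A' B) : A.card = A'.card := by
  have card_ne_zero : B.card ≠ 0 := right_ne_zero_of_mul (h.card_mul_card ▸ Nat.card_pos.ne')
  exact mul_right_cancel₀ card_ne_zero (h.card_mul_card.trans h'.card_mul_card.symm)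

lemma of_surjective (hcard : A.card * B.card = Nat.card G)
    (hsurj : ∀ z : G, ∃ a ∈ A, ∃ b ∈ B, a + b = z) : Tiles A B := by
  refine (Nat.bijective_iff_surjective_and_card _).2 ⟨fun z => ?_, by simpa using hcard⟩
  obtain ⟨a, ha, b, hb, hab⟩ := hsurj z
  exact ⟨(⟨a, ha⟩, ⟨b, hb⟩), hab⟩

lemma of_injective (hcard : A.card * B.card = Nat.card G)
    (hinj : ∀ a ∈ A, ∀ b ∈ B, ∀ a' ∈ A, ∀ b' ∈ B, a + b = a' + b' → a = a' ∧ b = b') :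
    Tiles A B := by
  refine (Nat.bijective_iff_injective_and_card _).2 ⟨?_, by simpa using hcard⟩
  rintro ⟨⟨a, ha⟩, ⟨b, hb⟩⟩ ⟨⟨a', ha'⟩, ⟨b', hb'⟩⟩ hab
  simpa only [Prod.mk.injEq, Subtype.mk.injEq] using hinj a ha b hb a' ha' b' hb' hab

end Tiles

/-- The indicator of a finite set `A ⊆ G`, as an element of the group algebra `k[G]`. -/
noncomputable def indicatorAlgebra (k : Type*) [Semiring k] (A : Finset G) :
    AddMonoidAlgebra k G :=
  ∑ a ∈ A, AddMonoidAlgebra.single a 1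

section indicatorAlgebra

variable {k : Type*} [CommRing k] {A B : Finset G}

lemma Tiles.indicatorAlgebra_mul [Fintype G] (h : Tiles A B) :
    indicatorAlgebra k A * indicatorAlgebra k B = indicatorAlgebra k Finset.univ := by
  simp only [indicatorAlgebra, Finset.sum_mul_sum, AddMonoidAlgebra.single_mul_single, mul_one]
  exact h.sum_add fun z => AddMonoidAlgebra.single z (1 : k)

lemma indicatorAlgebra_mul_univ [Fintype G] :
    indicatorAlgebra k A * indicatorAlgebra k Finset.univ =
      (A.card : AddMonoidAlgebra k G) * indicatorAlgebra k Finset.univ := by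
  have translate (a : G) : AddMonoidAlgebra.single a (1 : k) * indicatorAlgebra k Finset.univ =
      indicatorAlgebra k Finset.univ := by
    simp only [indicatorAlgebra, Finset.mul_sum, AddMonoidAlgebra.single_mul_single, mul_one]
    exact Equiv.sum_comp (Equiv.addLeft a) fun z => AddMonoidAlgebra.single z (1 : k)
  rw [indicatorAlgebra, Finset.sum_mul, Finset.sum_congr rfl fun a _ => translate a,
    Finset.sum_const, nsmul_eq_mul]

lemma indicatorAlgebra_pow_mul_univ [Fintype G] (n : ℕ) :
    indicatorAlgebra k A ^ n * indicatorAlgebra k Finset.univ =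
      (A.card : AddMonoidAlgebra k G) ^ n * indicatorAlgebra k Finset.univ := by
  induction n with
  | zero => simp only [pow_zero]
  | succ n ih =>
    rw [pow_succ, mul_assoc, indicatorAlgebra_mul_univ, mul_left_comm, ih]
    ring

lemma indicatorAlgebra_pow_char (q : ℕ) [Fact q.Prime] [CharP k q] :
    indicatorAlgebra k A ^ q = ∑ a ∈ A, AddMonoidAlgebra.single (q • a) (1 : k) := by
  have : ExpChar (AddMonoidAlgebra k G) q := by
    have := charP_of_injective_algebraMap
      (FaithfulSMul.algebraMap_injective k (AddMonoidAlgebra k G)) q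
    infer_instance
  rw [indicatorAlgebra, sum_pow_char]
  simp only [AddMonoidAlgebra.single_pow, one_pow]

end indicatorAlgebra

namespace Tiles

variable [Finite G] {A B : Finset G}

-- In `𝔽_q[G]`, `A ^ q * B = A ^ (q - 1) * G = |A| ^ (q - 1) * G = G`, and `A ^ q` is `q • A`.
lemma exists_prime_smul_add_eq (h : Tiles A B) {q : ℕ} (hq : q.Prime) (hqA : ¬ q ∣ A.card)
    (z : G) : ∃ a ∈ A, ∃ b ∈ B, q • a + b = z := by
  have : Fact q.Prime := ⟨hq⟩
  have := Fintype.ofFinite G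
  have card_pow : (A.card : AddMonoidAlgebra (ZMod q) G) ^ (q - 1) = 1 := by
    have := ZMod.pow_card_sub_one_eq_one (mt (ZMod.natCast_eq_zero_iff A.card q).1 hqA)
    simpa only [map_pow, map_natCast, map_one] using
      congrArg (algebraMap (ZMod q) (AddMonoidAlgebra (ZMod q) G)) this
  have frobenius : (∑ a ∈ A, AddMonoidAlgebra.single (q • a) (1 : ZMod q)) *
      indicatorAlgebra (ZMod q) B = indicatorAlgebra (ZMod q) Finset.univ := by
    rw [← indicatorAlgebra_pow_char, ← pow_sub_one_mul hq.ne_zero, mul_assoc,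
      h.indicatorAlgebra_mul, indicatorAlgebra_pow_mul_univ, card_pow, one_mul]
  by_contra! missed
  have coeff_z := congrArg (fun f => f.coeff z) frobenius
  classical
  simp only [indicatorAlgebra, Finset.sum_mul_sum, AddMonoidAlgebra.single_mul_single, mul_one,
    AddMonoidAlgebra.coeff_sum, Finsupp.finsetSum_apply, AddMonoidAlgebra.coeff_single,
    Finsupp.single_apply] at coeff_z
  rw [Finset.sum_eq_zero fun a ha => Finset.sum_eq_zero fun b hb => if_neg (missed a ha b hb)]
    at coeff_z
  simp at coeff_z

variable [DecidableEq G]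

lemma of_surjective_image (h : Tiles A B) {f : G → G}
    (hsurj : ∀ z : G, ∃ a ∈ A, ∃ b ∈ B, f a + b = z) : Tiles (A.image f) B := by
  have surj (z : G) : ∃ a ∈ A.image f, ∃ b ∈ B, a + b = z := by
    obtain ⟨a, ha, b, hb, hz⟩ := hsurj z
    exact ⟨f a, Finset.mem_image_of_mem f ha, b, hb, hz⟩
  refine of_surjective (le_antisymm ?_ ?_) surj
  · exact h.card_mul_card ▸ Nat.mul_le_mul_right _ Finset.card_image_le
  · have := Fintype.ofFinite G
    rw [← Finset.card_product, Nat.card_eq_fintype_card, ← Finset.card_univ]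
    refine Finset.card_le_card_of_surjOn (fun x : G × G => x.1 + x.2) fun z _ => ?_
    obtain ⟨a, ha, b, hb, hz⟩ := surj z
    exact ⟨(a, b), Finset.mem_coe.2 (Finset.mem_product.2 ⟨ha, hb⟩), hz⟩

lemma nsmul (h : Tiles A B) {n : ℕ} (hn : n.Coprime (Nat.card G)) :
    Tiles (A.image (n • ·)) B := by
  induction n using induction_on_primes with
  | zero =>
    have := Finite.card_le_one_iff_subsingleton.1 ((Nat.coprime_zero_left _).1 hn).le
    rwa [Finset.image_congr fun a _ => Subsingleton.elim (0 • a) a, Finset.image_id']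
  | one => simpa only [one_smul, Finset.image_id'] using h
  | prime_mul q n hq ih =>
    have hnA := ih hn.coprime_mul_left
    have not_dvd : ¬ q ∣ (A.image (n • ·)).card := fun hdvd =>
      (hq.coprime_iff_not_dvd.1 hn.coprime_mul_right) (hnA.card_mul_card ▸ hdvd.mul_right _)
    simpa only [Finset.image_image, Function.comp_def, mul_smul] using
      hnA.of_surjective_image (hnA.exists_prime_smul_add_eq hq not_dvd)

lemma exchange_translate (h : Tiles A B) {F : Finset G} (hF : F ⊆ A) (t : G)
    (hdisj : Disjoint A (F.image (· + t)))
    (hsub : ∀ f ∈ F, ∀ b ∈ B, ∃ f' ∈ F, ∃ b' ∈ B, f + t + b = f' + b') :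
    Tiles (A \ F ∪ F.image (· + t)) B := by
  have card_eq : (A \ F ∪ F.image (· + t)).card = A.card := by
    rw [Finset.card_union_of_disjoint (hdisj.mono_left Finset.sdiff_subset),
      Finset.card_image_of_injective _ (add_left_injective t),
      Finset.card_sdiff_add_card_eq_card hF]
  have off_translate : ∀ a ∈ A \ F, ∀ f ∈ F, ∀ b ∈ B, ∀ b' ∈ B, a + b ≠ f + t + b' := by
    intro a ha f hf b hb b' hb' hab
    obtain ⟨f', hf', b'', hb'', hft⟩ := hsub f hf b' hb'
    rw [Finset.mem_sdiff] at ha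
    exact ha.2 ((h.eq_and_eq ha.1 hb (hF hf') hb'' (hab.trans hft)).1 ▸ hf')
  refine of_injective (card_eq ▸ h.card_mul_card) fun a ha b hb a' ha' b' hb' hab => ?_
  rw [Finset.mem_union, Finset.mem_image] at ha ha'
  rcases ha with ha | ⟨f, hf, rfl⟩ <;> rcases ha' with ha' | ⟨f', hf', rfl⟩
  · exact h.eq_and_eq (Finset.sdiff_subset ha) hb (Finset.sdiff_subset ha') hb' hab
  · exact absurd hab (off_translate a ha f' hf' b hb b' hb')
  · exact absurd hab.symm (off_translate a' ha' f hf b' hb' b hb)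
  · rw [add_right_comm, add_right_comm f', add_left_inj] at hab
    obtain ⟨rfl, rfl⟩ := h.eq_and_eq (hF hf) hb (hF hf') hb' hab
    exact ⟨rfl, rfl⟩

end Tiles

end Tiling

section Characters

variable {G K : Type*} [AddCommGroup G] [CommRing K] {A B : Finset G} {ψ : AddChar G K}

lemma Tiles.sum_addChar_mul_sum_addChar [Fintype G] (h : Tiles A B) :
    (∑ a ∈ A, ψ a) * ∑ b ∈ B, ψ b = ∑ z, ψ z := by
  simp only [Finset.sum_mul_sum, ← AddChar.map_add_eq_mul]
  exact h.sum_add ψ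

lemma sum_addChar_eq_zero_of_add_mem [IsDomain K] {f : G} (hA : ∀ x ∈ A, x + f ∈ A)
    (hf : ψ f ≠ 1) : ∑ x ∈ A, ψ x = 0 := by
  classical
  have translate : A.image (· + f) = A := by
    refine Finset.eq_of_subset_of_card_le (Finset.image_subset_iff.2 hA) ?_
    rw [Finset.card_image_of_injective _ (add_left_injective f)]
  have mul_eq_self : (∑ x ∈ A, ψ x) * ψ f = ∑ x ∈ A, ψ x := by
    conv_rhs => rw [← translate, Finset.sum_image (add_left_injective f).injOn]
    simp only [Finset.sum_mul, AddChar.map_add_eq_mul]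
  exact (mul_right_eq_self₀.1 mul_eq_self).resolve_left hf

end Characters

section Sands

variable {R : Type*} [CommRing R] [Finite R] {A B : Finset R}

lemma coprime_card_of_isUnit_natCast {n : ℕ} (hn : IsUnit (n : R)) :
    n.Coprime (Nat.card R) := by
  refine Nat.coprime_of_dvd fun q hq hqn hqR => ?_
  have : Fact q.Prime := ⟨hq⟩
  obtain ⟨x, hx⟩ := exists_prime_addOrderOf_dvd_card' q hqR
  have : n • x = 0 := addOrderOf_dvd_iff_nsmul_eq_zero.1 (hx.symm ▸ hqn)
  rw [nsmul_eq_mul, hn.mul_right_eq_zero] at this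
  exact hq.one_lt.ne' (by rw [← hx, this, addOrderOf_zero])

lemma Tiles.unit_mul [DecidableEq R] (h : Tiles A B) (hR : Function.Surjective (Nat.cast : ℕ → R))
    {r : R} (hr : IsUnit r) : Tiles (A.image (r * ·)) B := by
  obtain ⟨n, rfl⟩ := hR r
  simpa only [nsmul_eq_mul] using h.nsmul (coprime_card_of_isUnit_natCast hr)

lemma Tiles.eq_of_associated_sub (h : Tiles A B) (hR : Function.Surjective (Nat.cast : ℕ → R))
    {a a' b b' : R} (ha : a ∈ A) (ha' : a' ∈ A) (hb : b ∈ B) (hb' : b' ∈ B)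
    (hab : Associated (a - a') (b - b')) : a = a' := by
  classical
  obtain ⟨r, hr⟩ := hab
  have := (h.unit_mul hR r.isUnit).eq_and_eq (Finset.mem_image_of_mem _ ha) hb'
    (Finset.mem_image_of_mem _ ha') hb (by linear_combination hr)
  exact r.isUnit.mul_left_cancel this.1

end Sands

section ZModDivisibility

variable {N d : ℕ}

lemma castHom_eq_zero_iff_natCast_dvd (hd : d ∣ N) (x : ZMod N) :
    ZMod.castHom hd (ZMod d) x = 0 ↔ (d : ZMod N) ∣ x := by
  constructor
  · obtain ⟨n, rfl⟩ := ZMod.intCast_surjective x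
    rw [map_intCast, ZMod.intCast_zmod_eq_zero_iff_dvd]
    rintro ⟨k, rfl⟩
    exact ⟨k, by push_cast; rfl⟩
  · intro h
    simpa only [map_natCast, ZMod.natCast_self, zero_dvd_iff] using
      map_dvd (ZMod.castHom hd (ZMod d)) h

lemma natCast_dvd_iff_dvd_val [NeZero N] (hd : d ∣ N) (x : ZMod N) :
    (d : ZMod N) ∣ x ↔ d ∣ x.val := by
  rw [← castHom_eq_zero_iff_natCast_dvd hd, ZMod.castHom_apply, ZMod.cast_eq_val,
    ZMod.natCast_eq_zero_iff]

lemma associated_natCast_gcd_val [NeZero N] (x : ZMod N) :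
    Associated x (Nat.gcd x.val N : ZMod N) := by
  obtain ⟨d, hdN, u, hu, hx⟩ := x.eq_unit_mul_divisor
  have hxd : Associated x d := hx ▸ (associated_unit_mul_left (d : ZMod N) u hu)
  have hgN : Nat.gcd x.val N ∣ N := Nat.gcd_dvd_right _ _
  have gcd_dvd : Nat.gcd x.val N ∣ d := by
    have := hxd.dvd_iff_dvd_right.1 ((natCast_dvd_iff_dvd_val hgN x).2 (Nat.gcd_dvd_left _ _))
    rwa [← castHom_eq_zero_iff_natCast_dvd hgN, map_natCast, ZMod.natCast_eq_zero_iff] at this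
  have dvd_gcd : d ∣ Nat.gcd x.val N :=
    Nat.dvd_gcd ((natCast_dvd_iff_dvd_val hdN x).1 hxd.symm.dvd) hdN
  rwa [Nat.dvd_antisymm gcd_dvd dvd_gcd]

lemma natCast_ne_zero_of_sq (q : ℕ) [Fact q.Prime] : (q : ZMod (q ^ 2)) ≠ 0 := by
  rw [Ne, ZMod.natCast_eq_zero_iff]
  exact Nat.not_dvd_of_pos_of_lt (NeZero.pos q)
    (lt_self_pow₀ (Fact.out : q.Prime).one_lt one_lt_two)

variable {q : ℕ} [Fact q.Prime] {x y : ZMod (q ^ 2)}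

lemma exists_associated_pow_of_sq (x : ZMod (q ^ 2)) :
    ∃ i ≤ 2, Associated x ((q : ZMod (q ^ 2)) ^ i) := by
  obtain ⟨i, hi, hgcd⟩ := (Nat.dvd_prime_pow Fact.out).1 (Nat.gcd_dvd_right x.val (q ^ 2))
  exact ⟨i, hi, by simpa only [hgcd, Nat.cast_pow] using associated_natCast_gcd_val x⟩

lemma associated_of_sq (h0 : x = 0 ↔ y = 0)
    (hq : (q : ZMod (q ^ 2)) ∣ x ↔ (q : ZMod (q ^ 2)) ∣ y) : Associated x y := by
  have q_sq : (q : ZMod (q ^ 2)) ^ 2 = 0 := by exact_mod_cast ZMod.natCast_self (q ^ 2)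
  have q_ne := natCast_ne_zero_of_sq q
  have q_not_unit : ¬ IsUnit (q : ZMod (q ^ 2)) := fun h =>
    q_ne (h.mul_right_eq_zero.1 (by rwa [← sq]))
  obtain ⟨i, hi, hxi⟩ := exists_associated_pow_of_sq x
  obtain ⟨j, hj, hyj⟩ := exists_associated_pow_of_sq y
  rw [hxi.eq_zero_iff, hyj.eq_zero_iff] at h0
  rw [hxi.dvd_iff_dvd_right, hyj.dvd_iff_dvd_right] at hq
  have one_ne : (1 : ZMod (q ^ 2)) ≠ 0 := fun h => q_ne (eq_zero_of_zero_eq_one h.symm _)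
  have exponent_eq : i = j := by
    interval_cases i <;> interval_cases j <;> simp_all [isUnit_iff_dvd_one]
  exact hxi.trans (exponent_eq ▸ hyj.symm)

end ZModDivisibility

section Coordinates

variable {ι : Type*} {p : ι → ℕ}

/-- The ring `∏ₘ ℤ/pₘ²`, that is, `ℤ/M` in coordinates. -/
abbrev SqProd (p : ι → ℕ) : Type _ := ∀ m, ZMod (p m ^ 2)

/-- Coordinatewise reduction `∏ₘ ℤ/pₘ² → ∏ₘ ℤ/pₘ`. Its fibres are the `D(M)`-grids. -/
def residue (p : ι → ℕ) : SqProd p →+* ∀ m, ZMod (p m) :=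
  RingHom.pi fun m =>
    (ZMod.castHom (dvd_pow_self (p m) two_ne_zero) (ZMod (p m))).comp (Pi.evalRingHom _ m)

variable {x y : SqProd p} {m : ι}

lemma residue_apply_eq_zero_iff : residue p x m = 0 ↔ (p m : ZMod (p m ^ 2)) ∣ x m :=
  castHom_eq_zero_iff_natCast_dvd (dvd_pow_self (p m) two_ne_zero) (x m)

lemma residue_apply_congr (h : x m = y m) : residue p x m = residue p y m :=
  congrArg (ZMod.castHom (dvd_pow_self (p m) two_ne_zero) (ZMod (p m))) h

/-- The line through `x` in the direction `l`. -/
def line (l : ι) (x : SqProd p) : Set (SqProd p) := {y | ∀ m ≠ l, y m = x m}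

lemma residue_single_natCast [DecidableEq ι] (l : ι) :
    residue p (Pi.single l (p l : ZMod (p l ^ 2))) = 0 := by
  ext m
  refine residue_apply_eq_zero_iff.2 ?_
  rcases eq_or_ne m l with rfl | hm
  · rw [Pi.single_eq_same]
  · rw [Pi.single_eq_of_ne hm]
    exact dvd_zero _

lemma mem_line_of_apply_eq {l μ ν : ι} (hcov : ∀ m, m = l ∨ m = μ ∨ m = ν) (hμ : x μ = y μ)
    (hν : x ν = y ν) : x ∈ line l y := by
  intro m hm
  rcases hcov m with rfl | rfl | rfl
  exacts [absurd rfl hm, hμ, hν]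

section PrimeModuli

variable [∀ m, Fact (p m).Prime]

lemma associated_iff_residue : Associated x y ↔
    ∀ m, (x m = 0 ↔ y m = 0) ∧ (residue p x m = 0 ↔ residue p y m = 0) := by
  constructor
  · intro h m
    have hm : Associated (x m) (y m) := h.map (Pi.evalMonoidHom _ m)
    rw [residue_apply_eq_zero_iff, residue_apply_eq_zero_iff, hm.dvd_iff_dvd_right]
    exact ⟨hm.eq_zero_iff, Iff.rfl⟩
  · intro h
    simp only [residue_apply_eq_zero_iff] at h
    choose u hu using fun m => associated_of_sq (h m).1 (h m).2
    exact ⟨MulEquiv.piUnits.symm u, funext hu⟩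

lemma associated_sub_iff {x' y' : SqProd p} : Associated (x - y) (x' - y') ↔
    ∀ m, (x m = y m ↔ x' m = y' m) ∧
      (residue p x m = residue p y m ↔ residue p x' m = residue p y' m) := by
  simp only [associated_iff_residue, map_sub, Pi.sub_apply, sub_eq_zero]

lemma associated_sub_of_residue_ne {x' y' : SqProd p} {l : ι}
    (hl : residue p x l ≠ residue p y l) (hl' : residue p x' l ≠ residue p y' l)
    (hoff : ∀ m ≠ l, (x m = y m ↔ x' m = y' m) ∧
      (residue p x m = residue p y m ↔ residue p x' m = residue p y' m)) :
    Associated (x - y) (x' - y') := by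
  refine associated_sub_iff.2 fun m => ?_
  rcases eq_or_ne m l with rfl | hm
  · exact ⟨iff_of_false (mt residue_apply_congr hl) (mt residue_apply_congr hl'),
      iff_of_false hl hl'⟩
  · exact hoff m hm

end PrimeModuli

variable [∀ m, NeZero (p m)] [Fintype ι] [DecidableEq ι]

/-- The `D(M)`-grid through `x`. -/
def grid (x : SqProd p) : Finset (SqProd p) :=
  Finset.univ.filter fun y => residue p y = residue p x

open Classical in
/-- The `M`-fiber through `x` in the direction `l`. -/
noncomputable def fiber (l : ι) (x : SqProd p) : Finset (SqProd p) :=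
  (grid x).filter (· ∈ line l x)

lemma mem_grid {x y : SqProd p} : y ∈ grid x ↔ residue p y = residue p x := by
  simp [grid]

lemma mem_fiber {l : ι} {x y : SqProd p} :
    y ∈ fiber l x ↔ residue p y = residue p x ∧ y ∈ line l x := by
  simp [fiber, mem_grid]

lemma mem_grid_of_mem_fiber {l : ι} {x y : SqProd p} (h : y ∈ fiber l x) : y ∈ grid x :=
  mem_grid.2 (mem_fiber.1 h).1

end Coordinates

lemma card_nsmul_eq_zero_of_forall_eq_add {α H : Type*} [AddCommGroup H] {E : Finset α}
    {σ : α → α} (hσ : Set.MapsTo σ E E) (hinj : Set.InjOn σ E) {f : α → H} {c : H}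
    (hf : ∀ b ∈ E, f (σ b) = f b + c) : E.card • c = 0 := by
  classical
  have image_eq : E.image σ = E :=
    Finset.eq_of_subset_of_card_le (Finset.image_subset_iff.2 hσ)
      (Finset.card_image_of_injOn hinj).ge
  have sum_eq : ∑ b ∈ E, f b = ∑ b ∈ E, f b + E.card • c :=
    calc ∑ b ∈ E, f b = ∑ b ∈ E, f (σ b) := by
          conv_lhs => rw [← image_eq, Finset.sum_image hinj]
      _ = ∑ b ∈ E, f b + E.card • c := by
          rw [Finset.sum_congr rfl hf, Finset.sum_add_distrib, Finset.sum_const]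
  exact left_eq_add.1 sum_eq

section Transversal

variable {ι : Type*} {p : ι → ℕ} [∀ m, Fact (p m).Prime]

lemma pairwise_coprime_sq (hp : p.Injective) :
    Pairwise (Function.onFun Nat.Coprime fun m => p m ^ 2) := fun m m' hm =>
  Nat.coprime_pow_primes 2 2 (Fact.out : (p m).Prime) (Fact.out : (p m').Prime) (hp.ne hm)

instance neZero_prod_sq [Fintype ι] : NeZero (∏ m, p m ^ 2) :=
  ⟨Finset.prod_ne_zero_iff.2 fun _ _ => NeZero.ne _⟩

lemma natCast_surjective_sqProd [Finite ι] (hp : p.Injective) :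
    Function.Surjective (Nat.cast : ℕ → SqProd p) := fun x => by
  have := Fintype.ofFinite ι
  let e := ZMod.prodEquivPi _ (pairwise_coprime_sq hp)
  obtain ⟨n, hn⟩ := ZMod.natCast_zmod_surjective (e.symm x)
  exact ⟨n, by rw [← e.apply_symm_apply x, ← hn, map_natCast]⟩

variable {B : Finset (SqProd p)} {w : SqProd p} {l : ι}

lemma bijOn_residue_of_injOn [Fintype ι] (hB : B.card = ∏ m, p m)
    (hinj : Set.InjOn (residue p) B) : Set.BijOn (residue p) B Set.univ := by
  classical
  refine ⟨fun _ _ => Set.mem_univ _, hinj, ?_⟩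
  have image_eq : B.image (residue p) = Finset.univ := by
    rw [← Finset.card_eq_iff_eq_univ, Finset.card_image_of_injOn hinj, hB, Fintype.card_pi]
    simp only [ZMod.card]
  rw [Set.SurjOn, ← Finset.coe_image, image_eq, Finset.coe_univ]

lemma tiles_grid [Fintype ι] [DecidableEq ι] (hB : Set.BijOn (residue p) B Set.univ)
    (x : SqProd p) : Tiles (grid x) B := by
  refine ⟨?_, fun z => ?_⟩
  · rintro ⟨⟨a, ha⟩, ⟨b, hb⟩⟩ ⟨⟨a', ha'⟩, ⟨b', hb'⟩⟩ (hab : a + b = a' + b')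
    have residue_sum := congrArg (residue p) hab
    rw [map_add, map_add, mem_grid.1 ha, mem_grid.1 ha', add_right_inj] at residue_sum
    obtain rfl : b = b' := hB.injOn hb hb' residue_sum
    simpa using hab
  · obtain ⟨b, hb, hbz⟩ := hB.surjOn (Set.mem_univ (residue p (z - x)))
    have mem : z - b ∈ grid x := by rw [mem_grid, map_sub, hbz, map_sub, sub_sub_cancel]
    exact ⟨(⟨z - b, mem⟩, ⟨b, hb⟩), sub_add_cancel z b⟩

lemma card_filter_residue_eq_off [Fintype ι] [DecidableEq ι]
    (hB : Set.BijOn (residue p) B Set.univ) (c : SqProd p) :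
    (B.filter fun b => ∀ m ≠ l, residue p b m = residue p c m).card = p l := by
  rw [← ZMod.card (p l), ← Finset.card_univ]
  refine Finset.card_bij (fun b _ => residue p b l) (fun _ _ => Finset.mem_univ _) ?_ ?_
  · intro b hb b' hb' hl
    rw [Finset.mem_filter] at hb hb'
    refine hB.injOn hb.1 hb'.1 (funext fun m => ?_)
    rcases eq_or_ne m l with rfl | hm
    · exact hl
    · rw [hb.2 m hm, hb'.2 m hm]
  · intro t _
    obtain ⟨b, hb, hbt⟩ := hB.surjOn (Set.mem_univ (Function.update (residue p c) l t))
    refine ⟨b, Finset.mem_filter.2 ⟨hb, fun m hm => ?_⟩, ?_⟩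
    · rw [hbt, Function.update_of_ne hm]
    · rw [hbt, Function.update_self]

-- Modulo the direction `l`, translation by `w` permutes a class of `p l` elements of `B`, so adding
-- up their coordinates gives `p l * w m = 0`.
lemma apply_eq_zero_of_translate_mem [Finite ι] (hp : p.Injective)
    (hB : Set.BijOn (residue p) B Set.univ)
    (hBl : ∀ b ∈ B, ∀ b' ∈ B, b ∈ line l b' → b = b')
    (hw : ∀ m ≠ l, residue p w m = 0) (htranslate : ∀ b ∈ B, ∃ b' ∈ B, b' ∈ line l (b + w))
    {m : ι} (hm : m ≠ l) : w m = 0 := by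
  classical
  have := Fintype.ofFinite ι
  obtain ⟨c, -, -⟩ := hB.surjOn (Set.mem_univ 0)
  set E := B.filter fun b => ∀ m ≠ l, residue p b m = residue p c m with hE
  choose! σ σ_mem σ_line using htranslate
  have σ_mapsTo : ∀ b ∈ E, σ b ∈ E := by
    intro b hb
    rw [hE, Finset.mem_filter] at hb ⊢
    refine ⟨σ_mem b hb.1, fun m hm => ?_⟩
    rw [residue_apply_congr (σ_line b hb.1 m hm), map_add, Pi.add_apply, hw m hm, add_zero,
      hb.2 m hm]
  have E_sub : ∀ b ∈ E, b ∈ B := fun b hb => (Finset.mem_filter.1 hb).1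
  have σ_injOn : Set.InjOn σ E := by
    intro b hb b' hb' hσ
    refine hBl b (E_sub b hb) b' (E_sub b' hb') fun m hm => ?_
    have := σ_line b (E_sub b hb) m hm
    rw [hσ, σ_line b' (E_sub b' hb') m hm] at this
    exact (add_right_cancel this).symm
  have pl_mul : E.card • w m = 0 :=
    card_nsmul_eq_zero_of_forall_eq_add (f := (· m)) σ_mapsTo σ_injOn
      fun b hb => σ_line b (E_sub b hb) m hm
  rw [hE, card_filter_residue_eq_off hB, nsmul_eq_mul] at pl_mul
  have pl_unit : IsUnit (p l : ZMod (p m ^ 2)) :=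
    (ZMod.isUnit_iff_coprime _ _).2
      (((Nat.coprime_primes Fact.out Fact.out).2 (hp.ne hm.symm)).pow_right 2)
  exact pl_unit.mul_right_eq_zero.1 pl_mul

end Transversal

section SaturatingSet

variable {ι : Type*} {p : ι → ℕ}

/-- The saturating set `A_x` of Łaba and Londner: the elements of `A` whose difference with `x` has
the divisor type of some `b - b'` with `b, b' ∈ B`, divisor types being compared up to
associates. Every `z ∈ A` with `z + b' = x + b` belongs to it. -/
def saturatingSet (A B : Finset (SqProd p)) (x : SqProd p) : Set (SqProd p) :=
  {z | z ∈ A ∧ ∃ b ∈ B, ∃ b' ∈ B, Associated (z - x) (b - b')}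

variable {A B : Finset (SqProd p)} {x z z' a a' : SqProd p} {l : ι}

lemma mem_saturatingSet_of_add_eq {b b' : SqProd p} (hz : z ∈ A) (hb : b ∈ B) (hb' : b' ∈ B)
    (h : z + b' = x + b) : z ∈ saturatingSet A B x :=
  ⟨hz, b, hb, b', hb', by rw [sub_eq_sub_iff_add_eq_add.2 (h.trans (add_comm x b))]⟩

lemma Tiles.exists_mem_saturatingSet (h : Tiles A B) (x : SqProd p) {b : SqProd p} (hb : b ∈ B) :
    ∃ z ∈ saturatingSet A B x, ∃ b' ∈ B, z + b' = x + b := by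
  obtain ⟨z, hz, b', hb', hzb⟩ := h.exists_add_eq (x + b)
  exact ⟨z, mem_saturatingSet_of_add_eq hz hb hb' hzb, b', hb', hzb⟩

variable [∀ m, Fact (p m).Prime]

lemma exists_residue_ne_of_mem_saturatingSet (hB : Set.BijOn (residue p) B Set.univ) (hx : x ∉ A)
    (hz : z ∈ saturatingSet A B x) : ∃ m, residue p z m ≠ residue p x m := by
  by_contra! same_residue
  obtain ⟨hzA, b, hb, b', hb', hzb⟩ := hz
  rw [associated_sub_iff] at hzb
  have b_eq : b = b' := hB.injOn hb hb' (funext fun m => (hzb m).2.1 (same_residue m))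
  have z_eq : z = x := funext fun m => (hzb m).1.2 (congrFun b_eq m)
  exact hx (z_eq ▸ hzA)

lemma residue_ne_of_saturatingSet_subset_line (hB : Set.BijOn (residue p) B Set.univ)
    (hx : x ∉ A) (hsat : saturatingSet A B x ⊆ line l x) (hz : z ∈ saturatingSet A B x) :
    residue p z l ≠ residue p x l := by
  obtain ⟨m, hm⟩ := exists_residue_ne_of_mem_saturatingSet hB hx hz
  rcases eq_or_ne m l with rfl | hml
  · exact hm
  · exact absurd (residue_apply_congr (hsat hz m hml)) hm

lemma Tiles.eq_of_associated_saturatingSet [Finite ι] (h : Tiles A B) (hp : p.Injective)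
    (hz : z ∈ saturatingSet A B x) (ha : a ∈ A) (ha' : a' ∈ A)
    (haz : Associated (a - a') (z - x)) : a = a' := by
  obtain ⟨-, b, hb, b', hb', hzb⟩ := hz
  exact h.eq_of_associated_sub (natCast_surjective_sqProd hp) ha ha' hb hb' (haz.trans hzb)

lemma eq_of_mem_line [Finite ι] (h : Tiles A B) (hp : p.Injective)
    (hB : Set.BijOn (residue p) B Set.univ)
    (ha : a ∈ A) (ha' : a' ∈ A) (haa' : a ∈ line l a') (hl : residue p a l ≠ residue p a' l)
    {b b' : SqProd p} (hb : b ∈ B) (hb' : b' ∈ B) (hbb' : b ∈ line l b') : b = b' := by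
  by_contra hne
  have residue_ne : residue p b l ≠ residue p b' l := fun hbl =>
    hne <| hB.injOn hb hb' <| funext fun m => by
      rcases eq_or_ne m l with rfl | hm
      exacts [hbl, residue_apply_congr (hbb' m hm)]
  have a_eq : a = a' := by
    refine h.eq_of_associated_sub (natCast_surjective_sqProd hp) ha ha' hb hb'
      (associated_sub_of_residue_ne hl residue_ne fun m hm => ?_)
    exact ⟨iff_of_true (haa' m hm) (hbb' m hm), iff_of_true (residue_apply_congr (haa' m hm))
      (residue_apply_congr (hbb' m hm))⟩
  exact hl (by rw [a_eq])

variable [Fintype ι] [DecidableEq ι]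

lemma residue_eq_of_mem_fiber (h : Tiles A B) (hp : p.Injective) (ha : a ∈ A)
    (hax : a ∈ fiber l x) (hz : z ∈ saturatingSet A B x) : residue p z l = residue p x l := by
  rw [mem_fiber] at hax
  by_contra hne
  have z_eq : z = a := by
    refine h.eq_of_associated_saturatingSet hp hz hz.1 ha
      (associated_sub_of_residue_ne (by rwa [hax.1]) hne fun m hm => ?_)
    rw [hax.1, hax.2 m hm]
    exact ⟨Iff.rfl, Iff.rfl⟩
  exact hne (z_eq ▸ congrFun hax.1 l)

lemma exists_not_iff_of_mem_saturatingSet (h : Tiles A B) (hp : p.Injective) (ha : a ∈ A)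
    (hax : a ∈ grid x) (hz : z ∈ saturatingSet A B x) (hz' : z' ∈ saturatingSet A B x)
    (hzl : residue p z l ≠ residue p x l) (hzl' : residue p z' l ≠ residue p x l)
    (hoff : ∀ m ≠ l, residue p z m = residue p x m ∧ residue p z' m = residue p x m) :
    ∃ m ≠ l, ¬ (z' m = a m ↔ z m = x m) := by
  rw [mem_grid] at hax
  by_contra! same_pattern
  have z_eq : z' = a := by
    refine h.eq_of_associated_saturatingSet hp hz hz'.1 ha
      (associated_sub_of_residue_ne (by rwa [hax]) hzl fun m hm => ⟨same_pattern m hm, ?_⟩)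
    rw [hax]
    exact iff_of_true (hoff m hm).2 (hoff m hm).1
  exact hzl' (z_eq ▸ congrFun hax l)

lemma saturatingSet_subset_line_of_subset_parallel (h : Tiles A B) (hp : p.Injective)
    (hB : Set.BijOn (residue p) B Set.univ) (ha : a ∈ A) (hax : a ∈ grid x) (hz : z ∈ A)
    (hza : z ∈ line l a) (hzl : residue p z l ≠ residue p x l)
    (hsat : saturatingSet A B x ⊆ line l z) : saturatingSet A B x ⊆ line l x := by
  rw [mem_grid] at hax
  have w_eq_zero : ∀ m ≠ l, (x - z) m = 0 := by
    intro m hm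
    refine apply_eq_zero_of_translate_mem hp hB
      (fun b hb b' hb' => eq_of_mem_line h hp hB hz ha hza (by rwa [hax]) hb hb')
      (fun m hm => ?_) (fun b hb => ?_) hm
    · rw [map_sub, Pi.sub_apply, residue_apply_congr (hza m hm), hax, sub_self]
    · obtain ⟨z', hz', b', hb', hzb⟩ := h.exists_mem_saturatingSet x hb
      refine ⟨b', hb', fun m hm => ?_⟩
      have := congrFun hzb m
      simp only [Pi.add_apply, Pi.sub_apply, hsat hz' m hm] at this ⊢
      linear_combination this
  intro z' hz' m hm
  rw [hsat hz' m hm, ← sub_eq_zero, ← neg_sub, neg_eq_zero]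
  exact w_eq_zero m hm

section ThreeDirections

variable {μ ν : ι} {a₁ a₂ a₃ : SqProd p}

lemma residue_of_mem_saturatingSet (h : Tiles A B) (hp : p.Injective)
    (hB : Set.BijOn (residue p) B Set.univ) (hx : x ∉ A) (hcov : ∀ m, m = l ∨ m = μ ∨ m = ν)
    (ha₁ : a₁ ∈ A) (hfib₁ : a₁ ∈ fiber ν x) (ha₂ : a₂ ∈ A) (hfib₂ : a₂ ∈ fiber μ x)
    (hz : z ∈ saturatingSet A B x) :
    residue p z l ≠ residue p x l ∧ ∀ m ≠ l, residue p z m = residue p x m := by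
  have hoff : ∀ m ≠ l, residue p z m = residue p x m := by
    intro m hm
    rcases hcov m with rfl | rfl | rfl
    exacts [absurd rfl hm, residue_eq_of_mem_fiber h hp ha₂ hfib₂ hz,
      residue_eq_of_mem_fiber h hp ha₁ hfib₁ hz]
  refine ⟨fun hl => ?_, hoff⟩
  obtain ⟨m, hm⟩ := exists_residue_ne_of_mem_saturatingSet hB hx hz
  rcases eq_or_ne m l with rfl | hml
  exacts [hm hl, hm (hoff m hml)]

lemma saturatingSet_subset_line_of_forall_parallel (h : Tiles A B) (hp : p.Injective)
    (hB : Set.BijOn (residue p) B Set.univ)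
    (hzl : ∀ z ∈ saturatingSet A B x, residue p z l ≠ residue p x l)
    (hparallel : ∀ z ∈ saturatingSet A B x, ∀ z' ∈ saturatingSet A B x, z' ∈ line l z)
    (hrep : ∀ z ∈ saturatingSet A B x, z ∈ line l x ∨ ∃ a ∈ A, a ∈ grid x ∧ z ∈ line l a) :
    saturatingSet A B x ⊆ line l x := by
  intro z hz
  rcases hrep z hz with hzx | ⟨a, ha, hax, hza⟩
  · exact hzx
  · exact saturatingSet_subset_line_of_subset_parallel h hp hB ha hax hz.1 hza (hzl z hz)
      (hparallel z hz) hz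

lemma not_same_pattern_of_mem_saturatingSet (h : Tiles A B) (hp : p.Injective)
    (hcov : ∀ m, m = l ∨ m = μ ∨ m = ν)
    (hres : ∀ z ∈ saturatingSet A B x,
      residue p z l ≠ residue p x l ∧ ∀ m ≠ l, residue p z m = residue p x m)
    (hz : z ∈ saturatingSet A B x) (hz' : z' ∈ saturatingSet A B x)
    (ha : a ∈ A) (hax : a ∈ grid x) :
    ¬ ((z' μ = a μ ↔ z μ = x μ) ∧ (z' ν = a ν ↔ z ν = x ν)) := by
  rintro ⟨hμ, hν⟩
  obtain ⟨m, hml, hm⟩ := exists_not_iff_of_mem_saturatingSet h hp ha hax hz hz' (hres z hz).1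
    (hres z' hz').1 fun m hm => ⟨(hres z hz).2 m hm, (hres z' hz').2 m hm⟩
  rcases hcov m with rfl | rfl | rfl
  exacts [hml rfl, hm hμ, hm hν]

lemma saturatingSet_subset_line_of_corner (h : Tiles A B) (hp : p.Injective)
    (hB : Set.BijOn (residue p) B Set.univ) (hx : x ∉ A) (hμν : μ ≠ ν)
    (hcov : ∀ m, m = l ∨ m = μ ∨ m = ν)
    (ha₁ : a₁ ∈ A) (hfib₁ : a₁ ∈ fiber ν x) (ha₂ : a₂ ∈ A) (hfib₂ : a₂ ∈ fiber μ x)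
    (ha₃ : a₃ ∈ A) (hgrid₃ : a₃ ∈ grid x) (h₃μ : a₃ μ = a₂ μ) (h₃ν : a₃ ν = a₁ ν) :
    saturatingSet A B x ⊆ line l x := by
  have hres := fun z (hz : z ∈ saturatingSet A B x) =>
    residue_of_mem_saturatingSet h hp hB hx hcov ha₁ hfib₁ ha₂ hfib₂ hz
  have hgrid₁ := mem_grid_of_mem_fiber hfib₁
  have hgrid₂ := mem_grid_of_mem_fiber hfib₂
  have excluded := fun {a} ha hax z hz z' hz' => not_same_pattern_of_mem_saturatingSet (z := z)
    (z' := z') (a := a) h hp hcov hres hz hz' ha hax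
  have excluded₁ := excluded ha₁ hgrid₁
  have excluded₂ := excluded ha₂ hgrid₂
  have excluded₃ := excluded ha₃ hgrid₃
  have h₁μ : a₁ μ = x μ := (mem_fiber.1 hfib₁).2 μ hμν
  have h₂ν : a₂ ν = x ν := (mem_fiber.1 hfib₂).2 ν hμν.symm
  simp only [h₁μ, h₂ν, h₃μ, h₃ν] at excluded₁ excluded₂ excluded₃
  have patternν : ∀ z ∈ saturatingSet A B x, z ν = x ν ∨ z ν = a₁ ν := by grind
  have patternμ : ∀ z ∈ saturatingSet A B x, z μ = x μ ∨ z μ = a₂ μ := by grind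
  refine saturatingSet_subset_line_of_forall_parallel h hp hB (fun z hz => (hres z hz).1) ?_ ?_
  · intro z hz z' hz'
    refine mem_line_of_apply_eq hcov ?_ ?_ <;> grind
  · intro z hz
    rcases patternμ z hz with zμ | zμ <;> rcases patternν z hz with zν | zν
    · exact .inl (mem_line_of_apply_eq hcov zμ zν)
    · exact .inr ⟨a₁, ha₁, hgrid₁, mem_line_of_apply_eq hcov (zμ.trans h₁μ.symm) zν⟩
    · exact .inr ⟨a₂, ha₂, hgrid₂, mem_line_of_apply_eq hcov zμ (zν.trans h₂ν.symm)⟩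
    · exact .inr ⟨a₃, ha₃, hgrid₃,
        mem_line_of_apply_eq hcov (zμ.trans h₃μ.symm) (zν.trans h₃ν.symm)⟩

lemma saturatingSet_subset_line_of_two_points (h : Tiles A B) (hp : p.Injective)
    (hB : Set.BijOn (residue p) B Set.univ) (hx : x ∉ A) (hμν : μ ≠ ν)
    (hcov : ∀ m, m = l ∨ m = μ ∨ m = ν)
    (ha₁ : a₁ ∈ A) (hfib₁ : a₁ ∈ fiber ν x) (ha₂ : a₂ ∈ A) (hfib₂ : a₂ ∈ fiber μ x)
    (ha₃ : a₃ ∈ A) (hfib₃ : a₃ ∈ fiber μ x) (h₂₃ : a₂ μ ≠ a₃ μ) :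
    saturatingSet A B x ⊆ line l x := by
  have hres := fun z (hz : z ∈ saturatingSet A B x) =>
    residue_of_mem_saturatingSet h hp hB hx hcov ha₁ hfib₁ ha₂ hfib₂ hz
  have hgrid₁ := mem_grid_of_mem_fiber hfib₁
  have hgrid₂ := mem_grid_of_mem_fiber hfib₂
  have hgrid₃ := mem_grid_of_mem_fiber hfib₃
  have excluded := fun {a} ha hax z hz z' hz' => not_same_pattern_of_mem_saturatingSet (z := z)
    (z' := z') (a := a) h hp hcov hres hz hz' ha hax
  have excluded₁ := excluded ha₁ hgrid₁
  have excluded₂ := excluded ha₂ hgrid₂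
  have excluded₃ := excluded ha₃ hgrid₃
  have h₁μ : a₁ μ = x μ := (mem_fiber.1 hfib₁).2 μ hμν
  have h₂ν : a₂ ν = x ν := (mem_fiber.1 hfib₂).2 ν hμν.symm
  have h₃ν : a₃ ν = x ν := (mem_fiber.1 hfib₃).2 ν hμν.symm
  simp only [h₁μ, h₂ν, h₃ν] at excluded₁ excluded₂ excluded₃
  have patternμ : ∀ z ∈ saturatingSet A B x, z μ = x μ := by grind
  have patternν : ∀ z ∈ saturatingSet A B x, z ν = x ν ∨ z ν = a₁ ν := by grind
  refine saturatingSet_subset_line_of_forall_parallel h hp hB (fun z hz => (hres z hz).1) ?_ ?_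
  · intro z hz z' hz'
    refine mem_line_of_apply_eq hcov ?_ ?_ <;> grind
  · intro z hz
    rcases patternν z hz with zν | zν
    · exact .inl (mem_line_of_apply_eq hcov (patternμ z hz) zν)
    · exact .inr ⟨a₁, ha₁, hgrid₁,
        mem_line_of_apply_eq hcov ((patternμ z hz).trans h₁μ.symm) zν⟩

end ThreeDirections

end SaturatingSet

section FiberShift

variable {ι : Type*} {p : ι → ℕ} [Fintype ι] [DecidableEq ι] {l : ι} {x y z : SqProd p}

section Fibers

variable [∀ m, NeZero (p m)]

lemma sub_sub_mem_fiber : y - (x - z) ∈ fiber l z ↔ y ∈ fiber l x := by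
  simp only [mem_fiber, line, Set.mem_ofPred_eq, map_sub, Pi.sub_apply, sub_eq_iff_eq_add,
    add_sub_cancel]

lemma image_add_fiber : (fiber l z).image (· + (x - z)) = fiber l x := by
  ext y
  simp only [Finset.mem_image, ← eq_sub_iff_add_eq, exists_eq_right, sub_sub_mem_fiber]

end Fibers

/-- A character is adapted to the fibers if, in each direction `l`, either it is trivial on the
lines or its sum over each `M`-fiber vanishes. Exchanging parallel fibers then preserves its sum. -/
def FiberAdapted {K : Type*} [CommRing K] (ψ : AddChar (SqProd p) K) : Prop :=
  ∀ l, (∀ t, ψ (Pi.single l t) = 1) ∨ ψ (Pi.single l (p l : ZMod (p l ^ 2))) ≠ 1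

lemma sum_fiber_eq_of_mem_line [∀ m, NeZero (p m)] {K : Type*} [CommRing K] [IsDomain K]
    {ψ : AddChar (SqProd p) K} (hψ : FiberAdapted ψ) (hz : z ∈ line l x) :
    ∑ y ∈ fiber l z, ψ y = ∑ y ∈ fiber l x, ψ y := by
  rcases hψ l with trivial_on_lines | nontrivial
  · have sub_eq_single : x - z = Pi.single l ((x - z) l) := by
      ext m
      rcases eq_or_ne m l with rfl | hm
      · rw [Pi.single_eq_same]
      · rw [Pi.single_eq_of_ne hm, Pi.sub_apply, hz m hm, sub_self]
    rw [← image_add_fiber (x := x) (z := z), Finset.sum_image (add_left_injective _).injOn]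
    simp only [AddChar.map_add_eq_mul]
    rw [sub_eq_single, trivial_on_lines]
    simp only [mul_one]
  · have add_mem (w : SqProd p) :
        ∀ y ∈ fiber l w, y + Pi.single l (p l : ZMod (p l ^ 2)) ∈ fiber l w := by
      intro y hy
      rw [mem_fiber] at hy ⊢
      refine ⟨?_, fun m hm => ?_⟩
      · rw [map_add, residue_single_natCast, add_zero, hy.1]
      · rw [Pi.add_apply, Pi.single_eq_of_ne hm, add_zero, hy.2 m hm]
    rw [sum_addChar_eq_zero_of_add_mem (add_mem z) nontrivial,
      sum_addChar_eq_zero_of_add_mem (add_mem x) nontrivial]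

variable [∀ m, Fact (p m).Prime] {A B : Finset (SqProd p)}

lemma mem_fiber_of_mem_line (h : Tiles A B) (hp : p.Injective) (hy : y ∈ A) (hyx : y ∈ line l x)
    (hz : z ∈ saturatingSet A B x) (hzx : z ∈ line l x)
    (hzl : residue p z l ≠ residue p x l) : y ∈ fiber l z := by
  have line_eq : y ∈ line l z := fun m hm => (hyx m hm).trans (hzx m hm).symm
  refine mem_fiber.2 ⟨funext fun m => ?_, line_eq⟩
  rcases eq_or_ne m l with rfl | hm
  · by_contra hne
    have y_eq : y = z := h.eq_of_associated_saturatingSet hp hz hy hz.1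
      (associated_sub_of_residue_ne hne hzl fun m hm => by
        rw [hyx m hm, hzx m hm, residue_apply_congr (hyx m hm), residue_apply_congr (hzx m hm)]
        exact ⟨Iff.rfl, Iff.rfl⟩)
    exact hne (by rw [y_eq])
  · exact residue_apply_congr (line_eq m hm)

-- The unit `r` carrying `y - x` to `b - b'` turns `r A ⊕ B` into a tiling in which `r x + b` can
-- only be represented by `r y + b'`.
lemma fiber_subset_of_saturatingSet_subset_line (h : Tiles A B) (hp : p.Injective)
    (hB : Set.BijOn (residue p) B Set.univ) (hx : x ∉ A)
    (hsat : saturatingSet A B x ⊆ line l x) (hz : z ∈ saturatingSet A B x) : fiber l z ⊆ A := by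
  intro y hy
  rw [mem_fiber] at hy
  have hzl := residue_ne_of_saturatingSet_subset_line hB hx hsat hz
  obtain ⟨-, b, hb, b', hb', hzb⟩ := id hz
  have y_sub_associated : Associated (y - x) (b - b') :=
    (associated_sub_of_residue_ne (by rwa [hy.1]) hzl fun m hm => by
      rw [hy.1, hy.2 m hm]; exact ⟨Iff.rfl, Iff.rfl⟩).trans hzb
  obtain ⟨r, hr⟩ := y_sub_associated
  obtain ⟨_, hrz, b'', hb'', hrzb⟩ :=
    (h.unit_mul (natCast_surjective_sqProd hp) r.isUnit).exists_add_eq (r * x + b)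
  obtain ⟨z', hz', rfl⟩ := Finset.mem_image.1 hrz
  have hz'sat : z' ∈ saturatingSet A B x :=
    ⟨hz', b, hb, b'', hb'', r, by linear_combination hrzb⟩
  have residue_eq : residue p z' = residue p y := by
    rw [hy.1]
    exact (mem_fiber.1 (mem_fiber_of_mem_line h hp hz' (hsat hz'sat) hz (hsat hz) hzl)).1
  have b_eq : b' = b'' := by
    refine hB.injOn hb' hb'' ?_
    have b'_eq : b' = b - (y - x) * r := by linear_combination hr
    have b''_eq : b'' = b - (z' - x) * r := by linear_combination hrzb
    simp only [b'_eq, b''_eq, map_sub, map_mul, residue_eq]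
  have y_eq : y = z' := r.isUnit.mul_left_cancel (by linear_combination hr - hrzb - b_eq)
  exact y_eq ▸ hz'

lemma exists_fiber_shift (h : Tiles A B) (hp : p.Injective)
    (hB : Set.BijOn (residue p) B Set.univ) (hx : x ∉ A)
    (hsat : saturatingSet A B x ⊆ line l x) :
    ∃ z ∈ line l x, residue p z l ≠ residue p x l ∧ fiber l z ⊆ A ∧ Disjoint A (fiber l x) ∧
      Tiles (A \ fiber l z ∪ fiber l x) B := by
  obtain ⟨b, hb, -⟩ := hB.surjOn (Set.mem_univ 0)
  obtain ⟨z, hz, -⟩ := h.exists_mem_saturatingSet x hb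
  have hzl := residue_ne_of_saturatingSet_subset_line hB hx hsat hz
  have mem_fiber_z : ∀ y ∈ A, y ∈ line l x → y ∈ fiber l z := fun y hy hyx =>
    mem_fiber_of_mem_line h hp hy hyx hz (hsat hz) hzl
  have disjoint : Disjoint A (fiber l x) := by
    refine Finset.disjoint_left.2 fun y hy hyx => hzl ?_
    rw [← (mem_fiber.1 (mem_fiber_z y hy (mem_fiber.1 hyx).2)).1, (mem_fiber.1 hyx).1]
  refine ⟨z, hsat hz, hzl, fiber_subset_of_saturatingSet_subset_line h hp hB hx hsat hz,
    disjoint, ?_⟩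
  rw [← image_add_fiber (x := x) (z := z)] at disjoint ⊢
  refine h.exchange_translate (fiber_subset_of_saturatingSet_subset_line h hp hB hx hsat hz) _
    disjoint fun y hy c hc => ?_
  obtain ⟨z', hz', c', hc', hzc⟩ := h.exists_mem_saturatingSet x hc
  have hz'z := mem_fiber_z z' hz'.1 (hsat hz')
  refine ⟨y + z' - z, ?_, c', hc', by linear_combination -hzc⟩
  rw [mem_fiber] at hy hz'z ⊢
  refine ⟨by rw [map_sub, map_add, hz'z.1, add_sub_cancel_right, hy.1], fun m hm => ?_⟩
  rw [Pi.sub_apply, Pi.add_apply, hz'z.2 m hm, add_sub_cancel_right, hy.2 m hm]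

lemma exists_tiles_of_saturatingSet_subset_line (K : Type*) [CommRing K] [IsDomain K]
    (h : Tiles A B) (hp : p.Injective) (hB : Set.BijOn (residue p) B Set.univ) (hx : x ∉ A)
    (hsat : saturatingSet A B x ⊆ line l x) :
    ∃ A', Tiles A' B ∧ x ∈ A' ∧ (∀ y ∈ A, y ∈ grid x → y ∈ A') ∧
      ∀ ψ : AddChar (SqProd p) K, FiberAdapted ψ → ∑ a ∈ A', ψ a = ∑ a ∈ A, ψ a := by
  obtain ⟨z, hzx, hzl, hzA, disjoint, tiles⟩ := exists_fiber_shift h hp hB hx hsat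
  refine ⟨_, tiles, Finset.mem_union_right _ (mem_fiber.2 ⟨rfl, fun _ _ => rfl⟩), ?_, ?_⟩
  · intro y hy hyx
    refine Finset.mem_union_left _ (Finset.mem_sdiff.2 ⟨hy, fun hyz => hzl ?_⟩)
    rw [← mem_grid.1 hyx, (mem_fiber.1 hyz).1]
  · intro ψ hψ
    rw [Finset.sum_union (disjoint.mono_left Finset.sdiff_subset),
      ← sum_fiber_eq_of_mem_line hψ hzx, Finset.sum_sdiff hzA]

end FiberShift

section DiagonalBoxes

variable {ι : Type*} {p : ι → ℕ} [Fintype ι] [DecidableEq ι]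

section Grid

variable [∀ m, NeZero (p m)] {x₀ x y : SqProd p}

lemma update_mem_fiber (m : ι) (hx : x ∈ grid x₀) (hy : y ∈ grid x₀) :
    Function.update x m (y m) ∈ fiber m x := by
  rw [mem_grid] at hx hy
  refine mem_fiber.2 ⟨funext fun m' => ?_, fun m' hm' => Function.update_of_ne hm' _ _⟩
  rcases eq_or_ne m' m with rfl | hm'
  · rw [hx, ← hy]
    exact residue_apply_congr (Function.update_self _ _ _)
  · exact residue_apply_congr (Function.update_of_ne hm' _ _)

lemma update_mem_grid (m : ι) (hx : x ∈ grid x₀) (hy : y ∈ grid x₀) :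
    Function.update x m (y m) ∈ grid x₀ := by
  rw [mem_grid, (mem_fiber.1 (update_mem_fiber m hx hy)).1, mem_grid.1 hx]

lemma grid_eq_of_mem (hx : x ∈ grid x₀) : grid x = grid x₀ := by
  ext y
  rw [mem_grid, mem_grid, mem_grid.1 hx]

lemma exists_third_mem_grid {m : ι} (hodd : Odd (p m)) (hx : x ∈ grid x₀) (hy : y ∈ grid x₀)
    (hxy : x m ≠ y m) : ∃ z ∈ grid x₀, z m ≠ x m ∧ z m ≠ y m := by
  refine ⟨x + (x - y), ?_, ?_, fun hz => ?_⟩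
  · rw [mem_grid] at hx hy ⊢
    rw [map_add, map_sub, hx, hy, sub_self, add_zero]
  · rwa [Pi.add_apply, Pi.sub_apply, ne_eq, add_eq_left, sub_eq_zero]
  · refine ZMod.ne_neg_self hodd.pow (sub_ne_zero.2 hxy) ?_
    rw [Pi.add_apply, Pi.sub_apply] at hz
    linear_combination hz

end Grid

/-- A point `x ∉ A` is shiftable if its saturating set lies on a line through `x`; exchanging
parallel `M`-fibers then brings `x` into `A`. -/
def IsShiftable (A B : Finset (SqProd p)) (x : SqProd p) : Prop :=
  x ∉ A ∧ ∃ l, saturatingSet A B x ⊆ line l x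

/-- Diagonal boxes `P = {y ∈ Λ | ∀ m, y m ∈ I m}` and `P° = {y ∈ Λ | ∀ m, y m ∉ I m}` in `A` on the
grid `Λ` of `x₀`, together with the mixed box `R_v`: the union `P ∪ R_v` is the slab
`{y ∈ Λ | ∀ m ≠ v, y m ∈ I m}`. -/
structure DiagonalBoxes [∀ m, NeZero (p m)] (A : Finset (SqProd p)) (x₀ : SqProd p)
    (I : ∀ m, Set (ZMod (p m ^ 2))) (v : ι) : Prop where
  slab : ∀ y ∈ grid x₀, (∀ m ≠ v, y m ∈ I m) → y ∈ A
  compl : ∀ y ∈ grid x₀, (∀ m, y m ∉ I m) → y ∈ A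
  exists_inner : ∃ u ∈ grid x₀, ∀ m, u m ∈ I m
  exists_outer : ∃ q ∈ grid x₀, ∀ m, q m ∉ I m

namespace DiagonalBoxes

variable [∀ m, Fact (p m).Prime] {A A' B : Finset (SqProd p)} {x₀ x y w : SqProd p}
  {I : ∀ m, Set (ZMod (p m ^ 2))} {v μ ν : ι}

lemma mono (hD : DiagonalBoxes A x₀ I v) (hA : ∀ y ∈ A, y ∈ grid x₀ → y ∈ A') :
    DiagonalBoxes A' x₀ I v where
  slab y hy hyI := hA y (hD.slab y hy hyI) hy
  compl y hy hyI := hA y (hD.compl y hy hyI) hy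
  exists_inner := hD.exists_inner
  exists_outer := hD.exists_outer

section ThreeDirections

variable (hcov : ∀ m, m = v ∨ m = μ ∨ m = ν)

include hcov in
lemma mem_of_mem_of_mem (hD : DiagonalBoxes A x₀ I v) (hy : y ∈ grid x₀) (hμ : y μ ∈ I μ)
    (hν : y ν ∈ I ν) : y ∈ A := by
  refine hD.slab y hy fun m hm => ?_
  rcases hcov m with rfl | rfl | rfl
  exacts [absurd rfl hm, hμ, hν]

include hcov in
lemma mem_of_notMem (hD : DiagonalBoxes A x₀ I v) (hy : y ∈ grid x₀) (hv : y v ∉ I v)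
    (hμ : y μ ∉ I μ) (hν : y ν ∉ I ν) : y ∈ A := by
  refine hD.compl y hy fun m => ?_
  rcases hcov m with rfl | rfl | rfl
  exacts [hv, hμ, hν]

variable (h : Tiles A B) (hp : p.Injective) (hB : Set.BijOn (residue p) B Set.univ)
  (hvμ : v ≠ μ) (hvν : v ≠ ν) (hμν : μ ≠ ν)

include hcov h hp hB hμν

include hvμ in
lemma saturatingSet_subset_line_of_mem_corner (hD : DiagonalBoxes A x₀ I v)
    (hxg : x ∈ grid x₀) (hx : x ∉ A) (hxv : x v ∉ I v) (hxμ : x μ ∈ I μ) (hxν : x ν ∉ I ν)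
    (hy : y ∈ A) (hyg : y ∈ grid x₀) (hyμ : y μ ∉ I μ) (hyν : y ν ∈ I ν) :
    saturatingSet A B x ⊆ line v x := by
  have update_ν_mem : Function.update x ν (y ν) ∈ A :=
    hD.mem_of_mem_of_mem hcov (update_mem_grid ν hxg hyg) (by simpa [hμν]) (by simpa)
  have update_μ_mem : Function.update x μ (y μ) ∈ A :=
    hD.mem_of_notMem hcov (update_mem_grid μ hxg hyg) (by simpa [hvμ]) (by simpa)
      (by simpa [hμν.symm])
  exact saturatingSet_subset_line_of_corner h hp hB hx hμν hcov
    update_ν_mem (update_mem_fiber ν hxg hyg) update_μ_mem (update_mem_fiber μ hxg hyg)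
    hy (grid_eq_of_mem hxg ▸ hyg) (by simp) (by simp)

include hvμ in
lemma saturatingSet_subset_line_of_two_notMem (hD : DiagonalBoxes A x₀ I v)
    (hxg : x ∈ grid x₀) (hx : x ∉ A) (hxv : x v ∉ I v) (hxμ : x μ ∈ I μ) (hxν : x ν ∉ I ν)
    (hy : y ∈ grid x₀) (hyμ : y μ ∉ I μ) (hw : w ∈ grid x₀) (hwμ : w μ ∉ I μ) (hyw : y μ ≠ w μ) :
    saturatingSet A B x ⊆ line v x := by
  obtain ⟨u, hu, huI⟩ := hD.exists_inner
  have update_ν_mem : Function.update x ν (u ν) ∈ A :=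
    hD.mem_of_mem_of_mem hcov (update_mem_grid ν hxg hu) (by simpa [hμν]) (by simpa using huI ν)
  have update_μ_mem {w : SqProd p} (hw : w ∈ grid x₀) (hwI : w μ ∉ I μ) :
      Function.update x μ (w μ) ∈ A :=
    hD.mem_of_notMem hcov (update_mem_grid μ hxg hw) (by simpa [hvμ]) (by simpa)
      (by simpa [hμν.symm])
  exact saturatingSet_subset_line_of_two_points h hp hB hx hμν hcov
    update_ν_mem (update_mem_fiber ν hxg hu) (update_μ_mem hy hyμ) (update_mem_fiber μ hxg hy)
    (update_μ_mem hw hwμ) (update_mem_fiber μ hxg hw) (by simpa)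

include hvν in
lemma saturatingSet_subset_line_of_two_mem (hD : DiagonalBoxes A x₀ I v)
    (hxg : x ∈ grid x₀) (hx : x ∉ A) (hxv : x v ∉ I v) (hxμ : x μ ∉ I μ) (hxν : x ν ∈ I ν)
    (hy : y ∈ grid x₀) (hyμ : y μ ∈ I μ) (hw : w ∈ grid x₀) (hwμ : w μ ∈ I μ) (hyw : y μ ≠ w μ) :
    saturatingSet A B x ⊆ line v x := by
  obtain ⟨q, hq, hqI⟩ := hD.exists_outer
  have update_ν_mem : Function.update x ν (q ν) ∈ A :=
    hD.mem_of_notMem hcov (update_mem_grid ν hxg hq) (by simpa [hvν]) (by simpa [hμν])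
      (by simpa using hqI ν)
  have update_μ_mem {w : SqProd p} (hw : w ∈ grid x₀) (hwI : w μ ∈ I μ) :
      Function.update x μ (w μ) ∈ A :=
    hD.mem_of_mem_of_mem hcov (update_mem_grid μ hxg hw) (by simpa) (by simpa [hμν.symm])
  exact saturatingSet_subset_line_of_two_points h hp hB hx hμν hcov
    update_ν_mem (update_mem_fiber ν hxg hq) (update_μ_mem hy hyμ) (update_mem_fiber μ hxg hy)
    (update_μ_mem hw hwμ) (update_mem_fiber μ hxg hw) (by simpa)

-- Of three points on a line in the direction `μ`, two are on the same side of `I μ`.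
include hvμ hvν in
lemma exists_isShiftable_of_mem_of_notMem (hD : DiagonalBoxes A x₀ I v) (hodd : Odd (p μ))
    (hxg : x ∈ grid x₀) (hx : x ∉ A) (hxv : x v ∉ I v) (hxμ : x μ ∈ I μ) (hxν : x ν ∉ I ν) :
    ∃ y ∈ grid x₀, IsShiftable A B y := by
  obtain ⟨u, hu, huI⟩ := hD.exists_inner
  obtain ⟨q, hq, hqI⟩ := hD.exists_outer
  have huq : u μ ≠ q μ := fun h => hqI μ (h ▸ huI μ)
  obtain ⟨w, hw, hwu, hwq⟩ := exists_third_mem_grid hodd hu hq huq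
  set y := Function.update q ν (u ν)
  have hyg : y ∈ grid x₀ := update_mem_grid ν hq hu
  have hyv : y v ∉ I v := by simpa [y, hvν] using hqI v
  have hyμ : y μ ∉ I μ := by simpa [y, hμν] using hqI μ
  have hyν : y ν ∈ I ν := by simpa [y] using huI ν
  by_cases hyA : y ∈ A
  · exact ⟨x, hxg, hx, v, hD.saturatingSet_subset_line_of_mem_corner hcov h hp hB hvμ hμν
      hxg hx hxv hxμ hxν hyA hyg hyμ hyν⟩
  by_cases hwI : w μ ∈ I μ
  · exact ⟨y, hyg, hyA, v, hD.saturatingSet_subset_line_of_two_mem hcov h hp hB hvν hμν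
      hyg hyA hyv hyμ hyν hu (huI μ) hw hwI hwu.symm⟩
  · exact ⟨x, hxg, hx, v, hD.saturatingSet_subset_line_of_two_notMem hcov h hp hB hvμ hμν
      hxg hx hxv hxμ hxν hq (hqI μ) hw hwI hwq.symm⟩

include hvμ in
lemma saturatingSet_subset_line_of_mem (hD : DiagonalBoxes A x₀ I v)
    (hA : ∀ y ∈ grid x₀, y v ∉ I v → y ∈ A) (hxg : x ∈ grid x₀) (hx : x ∉ A) (hxν : x ν ∈ I ν) :
    saturatingSet A B x ⊆ line ν x := by
  obtain ⟨u, hu, huI⟩ := hD.exists_inner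
  obtain ⟨q, hq, hqI⟩ := hD.exists_outer
  have update_μ_mem : Function.update x μ (u μ) ∈ A :=
    hD.mem_of_mem_of_mem hcov (update_mem_grid μ hxg hu) (by simpa using huI μ)
      (by simpa [hμν.symm])
  have update_v_mem {y : SqProd p} (hy : y ∈ grid x₀) : Function.update y v (q v) ∈ A :=
    hA _ (update_mem_grid v hy hq) (by simpa using hqI v)
  exact saturatingSet_subset_line_of_corner h hp hB hx hvμ.symm
    (fun m => by have := hcov m; tauto)
    (update_v_mem hxg) (update_mem_fiber v hxg hq) update_μ_mem (update_mem_fiber μ hxg hu)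
    (update_v_mem (update_mem_grid μ hxg hu))
    (grid_eq_of_mem hxg ▸ update_mem_grid v (update_mem_grid μ hxg hu) hq)
    (by simp [hvμ.symm]) (by simp)

include hvμ hvν in
lemma exists_isShiftable_of_apply_notMem (hD : DiagonalBoxes A x₀ I v) (hodd : ∀ m, Odd (p m))
    (hxg : x ∈ grid x₀) (hx : x ∉ A) (hxv : x v ∉ I v) :
    ∃ y ∈ grid x₀, IsShiftable A B y := by
  have hcov' : ∀ m, m = v ∨ m = ν ∨ m = μ := fun m => by have := hcov m; tauto
  by_cases hxμ : x μ ∈ I μ <;> by_cases hxν : x ν ∈ I ν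
  · exact absurd (hD.mem_of_mem_of_mem hcov hxg hxμ hxν) hx
  · exact hD.exists_isShiftable_of_mem_of_notMem hcov h hp hB hvμ hvν hμν (hodd μ)
      hxg hx hxv hxμ hxν
  · exact hD.exists_isShiftable_of_mem_of_notMem hcov' h hp hB hvν hvμ hμν.symm (hodd ν)
      hxg hx hxv hxν hxμ
  · exact absurd (hD.mem_of_notMem hcov hxg hxv hxμ hxν) hx

include hvμ hvν in
lemma exists_isShiftable (hD : DiagonalBoxes A x₀ I v) (hodd : ∀ m, Odd (p m))
    (hA : ¬ grid x₀ ⊆ A) : ∃ x ∈ grid x₀, IsShiftable A B x := by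
  have hcov' : ∀ m, m = v ∨ m = ν ∨ m = μ := fun m => by have := hcov m; tauto
  by_contra hstuck
  have outer_mem : ∀ y ∈ grid x₀, y v ∉ I v → y ∈ A := fun y hy hyv => by_contra fun hyA =>
    hstuck (hD.exists_isShiftable_of_apply_notMem hcov h hp hB hvμ hvν hμν hodd hy hyA hyv)
  have mem_of_ν : ∀ y ∈ grid x₀, y ν ∈ I ν → y ∈ A := fun y hy hyν => by_contra fun hyA =>
    hstuck ⟨y, hy, hyA, ν, hD.saturatingSet_subset_line_of_mem hcov h hp hB hvμ hμν
      outer_mem hy hyA hyν⟩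
  have mem_of_μ : ∀ y ∈ grid x₀, y μ ∈ I μ → y ∈ A := fun y hy hyμ => by_contra fun hyA =>
    hstuck ⟨y, hy, hyA, μ, hD.saturatingSet_subset_line_of_mem hcov' h hp hB hvν hμν.symm
      outer_mem hy hyA hyμ⟩
  obtain ⟨x, hxg, hx⟩ := Finset.not_subset.1 hA
  obtain ⟨u, hu, huI⟩ := hD.exists_inner
  obtain ⟨q, hq, hqI⟩ := hD.exists_outer
  obtain ⟨b, hb, -⟩ := hB.surjOn (Set.mem_univ 0)
  obtain ⟨z, hz, -⟩ := h.exists_mem_saturatingSet x hb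
  obtain ⟨m, hm⟩ := exists_residue_ne_of_mem_saturatingSet hB hx hz
  refine hm ?_
  rcases hcov m with rfl | rfl | rfl
  · exact residue_eq_of_mem_fiber h hp (outer_mem _ (update_mem_grid m hxg hq)
      (by simpa using hqI m)) (update_mem_fiber m hxg hq) hz
  · exact residue_eq_of_mem_fiber h hp (mem_of_μ _ (update_mem_grid m hxg hu)
      (by simpa using huI m)) (update_mem_fiber m hxg hu) hz
  · exact residue_eq_of_mem_fiber h hp (mem_of_ν _ (update_mem_grid m hxg hu)
      (by simpa using huI m)) (update_mem_fiber m hxg hu) hz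

include hvμ hvν in
-- Induction on the number of points of the grid missing from `A`.
theorem sum_addChar_eq_sum_grid {K : Type*} [CommRing K] [IsDomain K] {ψ : AddChar (SqProd p) K}
    (hD : DiagonalBoxes A x₀ I v) (hodd : ∀ m, Odd (p m)) (hψ : FiberAdapted ψ) :
    ∑ a ∈ A, ψ a = ∑ y ∈ grid x₀, ψ y := by
  induction hn : (grid x₀ \ A).card using Nat.strong_induction_on generalizing A with
  | _ n ih =>
    by_cases hA : grid x₀ ⊆ A
    · rw [Finset.eq_of_subset_of_card_le hA (h.card_eq_card (tiles_grid hB x₀)).le]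
    · obtain ⟨x, hxg, hx, l, hsat⟩ := hD.exists_isShiftable hcov h hp hB hvμ hvν hμν hodd hA
      obtain ⟨A', h', hxA', mono, sum_eq⟩ :=
        exists_tiles_of_saturatingSet_subset_line K h hp hB hx hsat
      rw [grid_eq_of_mem hxg] at mono
      rw [← sum_eq ψ hψ]
      refine ih _ (hn ▸ Finset.card_lt_card ?_) h' (hD.mono mono) rfl
      refine (Finset.ssubset_iff_of_subset fun y hy => ?_).2 ⟨x, ?_, ?_⟩
      · rw [Finset.mem_sdiff] at hy ⊢
        exact ⟨hy.1, fun hyA => hy.2 (mono y hyA hy.1)⟩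
      · exact Finset.mem_sdiff.2 ⟨hxg, hx⟩
      · exact fun hxA => (Finset.mem_sdiff.1 hxA).2 hxA'

end ThreeDirections

end DiagonalBoxes

end DiagonalBoxes

section Characters

variable {ι : Type*} {p : ι → ℕ} {K : Type*} [CommRing K] [IsDomain K] {ψ : AddChar (SqProd p) K}

lemma sum_addChar_grid_eq_zero [Fintype ι] [DecidableEq ι] [∀ m, NeZero (p m)] {l : ι}
    (hψ : ψ (Pi.single l (p l : ZMod (p l ^ 2))) ≠ 1) (x : SqProd p) :
    ∑ y ∈ grid x, ψ y = 0 :=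
  sum_addChar_eq_zero_of_add_mem
    (fun y hy => by rwa [mem_grid, map_add, residue_single_natCast, add_zero, ← mem_grid]) hψ

lemma sum_addChar_eq_zero_of_bijOn_residue [Finite ι] [∀ m, Fact (p m).Prime] [CharZero K]
    {B : Finset (SqProd p)} (hB : Set.BijOn (residue p) B Set.univ) (hψ : ψ ≠ 1)
    (hres : ∀ x, residue p x = 0 → ψ x = 1) : ∑ b ∈ B, ψ b = 0 := by
  classical
  have := Fintype.ofFinite ι
  have on_grid : ∀ y ∈ grid (0 : SqProd p), ψ y = 1 := fun y hy =>
    hres y (by rw [mem_grid.1 hy, map_zero])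
  have grid_sum : ∑ y ∈ grid (0 : SqProd p), ψ y = (grid (0 : SqProd p)).card := by
    rw [Finset.sum_congr rfl on_grid, Finset.sum_const, nsmul_one]
  have grid_nonempty : (grid (0 : SqProd p)).Nonempty := ⟨0, mem_grid.2 rfl⟩
  have product := (tiles_grid hB 0).sum_addChar_mul_sum_addChar (ψ := ψ)
  rw [AddChar.sum_eq_zero_of_ne_one hψ, grid_sum] at product
  exact (mul_eq_zero.1 product).resolve_left (Nat.cast_ne_zero.2 grid_nonempty.card_pos.ne')

end Characters

section Cyclotomic

variable {M s : ℕ} {A : Finset (ZMod M)}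

lemma cycDvd_iff_sum_pow_eq_zero (hs : 0 < s) {ζ : ℂ} (hζ : IsPrimitiveRoot ζ s) :
    cycDvd M s A ↔ ∑ a ∈ A, ζ ^ a.val = 0 := by
  rw [cycDvd, cyclotomic_eq_minpoly hζ hs,
    ← minpoly.isIntegrallyClosed_dvd_iff (hζ.isIntegral hs), maskPoly]
  simp only [map_sum, map_pow, aeval_X]

lemma exists_addChar_cycDvd_iff [NeZero M] (hs : s ∣ M) : ∃ ψ : AddChar (ZMod M) ℂ,
    (∀ x, ψ x = 1 ↔ (s : ZMod M) ∣ x) ∧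
      ∀ A : Finset (ZMod M), cycDvd M s A ↔ ∑ a ∈ A, ψ a = 0 := by
  have s_pos : 0 < s := Nat.pos_of_dvd_of_pos hs (NeZero.pos M)
  have hζ := Complex.isPrimitiveRoot_exp s s_pos.ne'
  refine ⟨AddChar.zmodChar M ((hζ.pow_eq_one_iff_dvd M).2 hs), fun x => ?_, fun A => ?_⟩
  · rw [AddChar.zmodChar_apply, hζ.pow_eq_one_iff_dvd, natCast_dvd_iff_dvd_val hs]
  · rw [cycDvd_iff_sum_pow_eq_zero s_pos hζ]
    simp only [AddChar.zmodChar_apply]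

lemma eval_one_maskPoly : (maskPoly M A).eval 1 = A.card := by
  simp [maskPoly, eval_finsetSum]

lemma eval_one_cyclotomic_pow {q j : ℕ} [Fact q.Prime] (hj : 1 ≤ j) :
    (cyclotomic (q ^ j) ℤ).eval 1 = q := by
  obtain ⟨i, rfl⟩ := Nat.exists_eq_add_of_le' hj
  exact eval_one_cyclotomic_prime_pow i

lemma sq_dvd_card_of_cycDvd {q j k : ℕ} [Fact q.Prime] (hj : 1 ≤ j) (hk : 1 ≤ k) (hjk : j ≠ k)
    (hAj : cycDvd M (q ^ j) A) (hAk : cycDvd M (q ^ k) A) : q ^ 2 ∣ A.card := by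
  have q_prime : q.Prime := Fact.out
  have coprime : IsRelPrime (cyclotomic (q ^ j) ℤ) (cyclotomic (q ^ k) ℤ) := by
    have irreducible (i : ℕ) : Irreducible (cyclotomic (q ^ i) ℤ) :=
      cyclotomic.irreducible (pow_pos q_prime.pos i)
    refine (irreducible j).isRelPrime_iff_not_dvd.2 fun h => hjk ?_
    have eq := eq_of_monic_of_associated (cyclotomic.monic _ ℤ) (cyclotomic.monic _ ℤ)
      ((irreducible j).associated_of_dvd (irreducible k) h)
    exact Nat.pow_right_injective q_prime.two_le (cyclotomic_injective eq)
  obtain ⟨g, hg⟩ := coprime.mul_dvd hAj hAk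
  have card_eq := congrArg (eval 1) hg
  rw [eval_one_maskPoly, eval_mul, eval_mul, eval_one_cyclotomic_pow hj,
    eval_one_cyclotomic_pow hk, ← sq] at card_eq
  rw [← Int.natCast_dvd_natCast, card_eq, Nat.cast_pow]
  exact dvd_mul_right _ _

variable {ι : Type*} [Fintype ι] {p : ι → ℕ} [∀ m, Fact (p m).Prime]

lemma not_sq_dvd_prod (hp : p.Injective) (l : ι) : ¬ p l ^ 2 ∣ ∏ m, p m := by
  classical
  have coprime : (p l).Coprime (∏ m ∈ Finset.univ.erase l, p m) :=
    Nat.Coprime.prod_right fun m hm =>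
      (Nat.coprime_primes Fact.out Fact.out).2 (hp.ne (Finset.ne_of_mem_erase hm).symm)
  rw [← Finset.mul_prod_erase _ p (Finset.mem_univ l), sq]
  intro h
  have := Nat.dvd_of_mul_dvd_mul_left (NeZero.pos (p l)) h
  exact (Fact.out : (p l).Prime).not_dvd_one (coprime.dvd_mul_right.1 (by simpa using this))

lemma satisfiesT2_of_forall_cycDvd {n k : ℕ} (hM : M ∣ ∏ m, p m ^ n) (hk : 1 ≤ k)
    (hp : p.Injective) (hA : A.card = ∏ m, p m)
    (hcyc : ∀ S : Finset ι, S.Nonempty → cycDvd M (∏ m ∈ S, p m ^ k) A) : SatisfiesT2 M A := by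
  classical
  intro Q e hQ hQe
  have subset_image : Q ⊆ Finset.univ.image p := by
    intro q hq
    obtain ⟨q_prime, he, q_dvd, -⟩ := hQe q hq
    obtain ⟨m, -, hm⟩ := q_prime.prime.exists_mem_finset_dvd
      ((dvd_pow_self q (Nat.one_le_iff_ne_zero.1 he)).trans (q_dvd.trans hM))
    exact Finset.mem_image.2 ⟨m, Finset.mem_univ m, ((Nat.prime_dvd_prime_iff_eq q_prime
      Fact.out).1 (q_prime.dvd_of_dvd_pow hm)).symm⟩
  have exponent_eq : ∀ m, p m ∈ Q → e (p m) = k := by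
    intro m hm
    obtain ⟨-, he, -, hcyc_e⟩ := hQe _ hm
    by_contra hne
    have hcyc_k := hcyc {m} (Finset.singleton_nonempty m)
    rw [Finset.prod_singleton] at hcyc_k
    exact not_sq_dvd_prod hp m (hA ▸ sq_dvd_card_of_cycDvd he hk hne hcyc_e hcyc_k)
  obtain ⟨S, -, rfl⟩ := Finset.subset_image_iff.1 subset_image
  rw [Finset.prod_image hp.injOn, Finset.prod_congr rfl fun m hm => by
    rw [exponent_eq m (Finset.mem_image_of_mem p hm)]]
  exact hcyc S (Finset.image_nonempty.1 hQ)

end Cyclotomic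

lemma isComplement_image_iff {G H : Type*} [AddGroup G] [AddGroup H] (e : G ≃+ H) {S T : Set G} :
    AddSubgroup.IsComplement (e '' S) (e '' T) ↔ AddSubgroup.IsComplement S T := by
  let pairs : S × T ≃ e '' S × e '' T := (e.toEquiv.image S).prodCongr (e.toEquiv.image T)
  have comm : (fun x : e '' S × e '' T => x.1.1 + x.2.1) ∘ pairs =
      e ∘ fun x : S × T => x.1.1 + x.2.1 := funext fun x => (map_add e _ _).symm
  rw [AddSubgroup.IsComplement, ← pairs.bijective_comp, comm]
  exact e.toEquiv.comp_bijective _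

lemma isTiling_iff_isComplement {M : ℕ} {S T : Set (ZMod M)} :
    IsTiling M S T ↔ AddSubgroup.IsComplement S T := by
  rw [AddSubgroup.isComplement_iff_existsUnique]
  refine forall_congr' fun z => ⟨?_, ?_⟩
  · rintro ⟨⟨a, b⟩, ⟨ha, hb, hab⟩, unique⟩
    refine ⟨(⟨a, ha⟩, ⟨b, hb⟩), hab, ?_⟩
    rintro ⟨⟨a', ha'⟩, ⟨b', hb'⟩⟩ hab'
    simpa only [Prod.mk.injEq, Subtype.mk.injEq] using unique (a', b') ⟨ha', hb', hab'⟩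
  · rintro ⟨⟨⟨a, ha⟩, ⟨b, hb⟩⟩, hab, unique⟩
    refine ⟨(a, b), ⟨ha, hb, hab⟩, ?_⟩
    rintro ⟨a', b'⟩ ⟨ha', hb', hab'⟩
    simpa only [Prod.mk.injEq, Subtype.mk.injEq] using unique (⟨a', ha'⟩, ⟨b', hb'⟩) hab'

lemma prod_pow_dvd_prod_pow {ι : Type*} [Fintype ι] (p : ι → ℕ) {k n : ℕ} (hkn : k ≤ n)
    (S : Finset ι) : ∏ m ∈ S, p m ^ k ∣ ∏ m, p m ^ n :=
  (Finset.prod_dvd_prod_of_subset _ _ _ S.subset_univ).trans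
    (Finset.prod_dvd_prod_of_dvd _ _ fun m _ => pow_dvd_pow (p m) hkn)

section ChineseRemainder

variable {ι : Type*} [Fintype ι] {p : ι → ℕ} [∀ m, Fact (p m).Prime]

/-- Coordinates on `ℤ/M` for `M = ∏ₘ pₘ²`, by the Chinese remainder theorem. -/
noncomputable def crt (hp : p.Injective) : ZMod (∏ m, p m ^ 2) ≃+* SqProd p :=
  ZMod.prodEquivPi _ (pairwise_coprime_sq hp)

variable (hp : p.Injective) {x y : ZMod (∏ m, p m ^ 2)}

lemma natCast_prod_pow_dvd_iff {k : ℕ} (hk : k ≤ 2) (S : Finset ι) :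
    ((∏ m ∈ S, p m ^ k : ℕ) : ZMod (∏ m, p m ^ 2)) ∣ x ↔
      ∀ m ∈ S, ((p m ^ k : ℕ) : ZMod (p m ^ 2)) ∣ crt hp x m := by
  have relPrime : (S : Set ι).Pairwise (Function.onFun IsRelPrime fun m => p m ^ k) :=
    fun m _ m' _ hm => Nat.coprime_iff_isRelPrime.1
      (Nat.coprime_pow_primes k k Fact.out Fact.out (hp.ne hm))
  have crt_apply (m : ι) : crt hp x m = (x.val : ZMod (p m ^ 2)) := by
    conv_lhs => rw [← ZMod.natCast_zmod_val x, map_natCast]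
    rfl
  rw [natCast_dvd_iff_dvd_val (prod_pow_dvd_prod_pow p hk S)]
  have dvd_iff (m : ι) : ((p m ^ k : ℕ) : ZMod (p m ^ 2)) ∣ crt hp x m ↔ p m ^ k ∣ x.val := by
    rw [crt_apply, ← castHom_eq_zero_iff_natCast_dvd (pow_dvd_pow (p m) hk), map_natCast,
      ZMod.natCast_eq_zero_iff]
  simp only [dvd_iff]
  exact ⟨fun h m hm => (Finset.dvd_prod_of_mem _ hm).trans h,
    Finset.prod_dvd_of_isRelPrime relPrime⟩

lemma natCast_sq_dvd_sub_iff (m : ι) :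
    ((p m ^ 2 : ℕ) : ZMod (∏ m, p m ^ 2)) ∣ x - y ↔ crt hp x m = crt hp y m := by
  have := natCast_prod_pow_dvd_iff hp (x := x - y) le_rfl {m}
  simp only [Finset.mem_singleton, forall_eq] at this
  rwa [Finset.prod_singleton, ZMod.natCast_self, zero_dvd_iff, map_sub, Pi.sub_apply,
    sub_eq_zero] at this

lemma natCast_prod_dvd_sub_iff : ((∏ m, p m : ℕ) : ZMod (∏ m, p m ^ 2)) ∣ x - y ↔
    residue p (crt hp x) = residue p (crt hp y) := by
  have := natCast_prod_pow_dvd_iff hp (x := x - y) (k := 1) one_le_two Finset.univ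
  simp only [pow_one, Finset.mem_univ, forall_const, ← residue_apply_eq_zero_iff] at this
  rw [this, ← sub_eq_zero, ← map_sub, ← map_sub, funext_iff]
  rfl

lemma associated_crt_sub_of_gcd_eq {x' y' : ZMod (∏ m, p m ^ 2)}
    (h : Nat.gcd (x - y).val (∏ m, p m ^ 2) = Nat.gcd (x' - y').val (∏ m, p m ^ 2)) :
    Associated (crt hp x - crt hp y) (crt hp x' - crt hp y') := by
  have := (associated_natCast_gcd_val (x - y)).trans
    (h ▸ (associated_natCast_gcd_val (x' - y')).symm)
  simpa only [map_sub] using this.map (crt hp)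

lemma cycDvd_of_forall_addChar {A : Finset (ZMod (∏ m, p m ^ 2))} {k : ℕ}
    (hk : k ≤ 2) {S : Finset ι}
    (hA : ∀ ψ : AddChar (SqProd p) ℂ,
      (∀ x, ψ x = 1 ↔ ∀ m ∈ S, ((p m ^ k : ℕ) : ZMod (p m ^ 2)) ∣ x m) →
      ∑ a ∈ A.image (crt hp), ψ a = 0) :
    cycDvd (∏ m, p m ^ 2) (∏ m ∈ S, p m ^ k) A := by
  obtain ⟨ψ, hker, hsum⟩ := exists_addChar_cycDvd_iff (prod_pow_dvd_prod_pow p hk S)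
  refine (hsum A).2 ?_
  have := hA (ψ.compAddMonoidHom (crt hp).symm.toAddMonoidHom) fun x => ?_
  · rw [Finset.sum_image (crt hp).injective.injOn] at this
    simpa using this
  · have := hker ((crt hp).symm x)
    rw [natCast_prod_pow_dvd_iff hp hk, RingEquiv.apply_symm_apply] at this
    exact this

end ChineseRemainder

lemma divSet_mono {M N : ℕ} {S T : Set (ZMod M)} (h : S ⊆ T) : DivSet M N S ⊆ DivSet M N T := by
  rintro d ⟨s, hs, s', hs', hd⟩
  exact ⟨s, h hs, s', h hs', hd⟩

section Transfer

variable {ι : Type*} [Fintype ι] {p : ι → ℕ} [∀ m, Fact (p m).Prime]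
  (hp : p.Injective) {A B : Finset (ZMod (∏ m, p m ^ 2))}

lemma IsTiling.card_left_eq (h : IsTiling (∏ m, p m ^ 2) A B) (hB : B.card = ∏ m, p m) :
    A.card = ∏ m, p m := by
  have card_mul := Tiles.card_mul_card (isTiling_iff_isComplement.1 h)
  rw [Nat.card_zmod, hB] at card_mul
  refine mul_right_cancel₀
    (Finset.prod_ne_zero_iff.2 fun m _ => (Fact.out : (p m).Prime).ne_zero) (card_mul.trans ?_)
  rw [Finset.prod_pow, sq]

lemma tiles_image_crt (h : IsTiling (∏ m, p m ^ 2) A B) :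
    Tiles (A.image (crt hp)) (B.image (crt hp)) := by
  rw [Tiles, Finset.coe_image, Finset.coe_image]
  exact (isComplement_image_iff (crt hp).toAddEquiv).2 (isTiling_iff_isComplement.1 h)

lemma gridSet_eq_preimage_grid [DecidableEq ι] (x : ZMod (∏ m, p m ^ 2)) :
    gridSet (∏ m, p m ^ 2) x (∏ m, p m) = crt hp ⁻¹' grid (crt hp x) := by
  ext y
  rw [gridSet, Set.mem_ofPred_eq, natCast_prod_dvd_sub_iff hp, Set.mem_preimage, Finset.mem_coe,
    mem_grid]

lemma isTiling_gridSet (hB : Set.BijOn (residue p) (B.image (crt hp)) Set.univ)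
    (x : ZMod (∏ m, p m ^ 2)) :
    IsTiling (∏ m, p m ^ 2) (gridSet (∏ m, p m ^ 2) x (∏ m, p m)) B := by
  classical
  rw [isTiling_iff_isComplement, ← isComplement_image_iff (crt hp).toAddEquiv]
  have := tiles_grid hB (crt hp x)
  rw [Tiles, Finset.coe_image] at this
  rw [gridSet_eq_preimage_grid hp]
  simpa [Set.image_preimage_eq _ (crt hp).surjective] using this

lemma bijOn_residue_of_forall_mem_divSet (h : IsTiling (∏ m, p m ^ 2) A B)
    (hB : B.card = ∏ m, p m)
    (hdiv : ∀ d, ∏ m, p m ∣ d → d ∣ ∏ m, p m ^ 2 →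
      d ∈ DivSet (∏ m, p m ^ 2) (∏ m, p m ^ 2) A) :
    Set.BijOn (residue p) (B.image (crt hp)) Set.univ := by
  refine bijOn_residue_of_injOn (by rwa [Finset.card_image_of_injective _ (crt hp).injective]) ?_
  rw [Finset.coe_image]
  rintro _ ⟨b, hb, rfl⟩ _ ⟨b', hb', rfl⟩ residue_eq
  have prod_dvd : ∏ m, p m ∣ ∏ m, p m ^ 2 :=
    Finset.prod_dvd_prod_of_dvd _ _ fun m _ => dvd_pow_self (p m) two_ne_zero
  have prod_dvd_gcd := Nat.dvd_gcd ((natCast_dvd_iff_dvd_val prod_dvd _).1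
    ((natCast_prod_dvd_sub_iff hp).2 residue_eq)) prod_dvd
  obtain ⟨a, ha, a', ha', hgcd⟩ := hdiv _ prod_dvd_gcd (Nat.gcd_dvd_right _ _)
  have associated := associated_crt_sub_of_gcd_eq hp hgcd
  have mem_image {C : Finset (ZMod (∏ m, p m ^ 2))} {c} (hc : c ∈ C) :
    crt hp c ∈ C.image (crt hp) := Finset.mem_image_of_mem _ hc
  have a_eq := (tiles_image_crt hp h).eq_of_associated_sub (natCast_surjective_sqProd hp)
    (mem_image ha) (mem_image ha') (mem_image hb) (mem_image hb') associated
  rwa [a_eq, sub_self, Associated.comm, associated_zero_iff_eq_zero, sub_eq_zero] at associated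

lemma satisfiesT2_of_bijOn_residue (hB : Set.BijOn (residue p) (B.image (crt hp)) Set.univ)
    (hcard : B.card = ∏ m, p m) : SatisfiesT2 (∏ m, p m ^ 2) B := by
  classical
  refine satisfiesT2_of_forall_cycDvd dvd_rfl le_rfl hp hcard fun S hS =>
    cycDvd_of_forall_addChar hp one_le_two fun ψ hker => ?_
  simp only [pow_one, ← residue_apply_eq_zero_iff] at hker
  refine sum_addChar_eq_zero_of_bijOn_residue hB ?_ fun x hx => (hker x).2 fun m _ => by
    rw [hx, Pi.zero_apply]
  rintro rfl
  obtain ⟨m, hm⟩ := hS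
  have := (hker 1).1 rfl m hm
  rw [map_one, Pi.one_apply] at this
  exact one_ne_zero this

lemma DiagonalBoxes.satisfiesT2 [DecidableEq ι] {v μ ν : ι} {x₀ : SqProd p}
    {I : ∀ m, Set (ZMod (p m ^ 2))}
    (hcov : ∀ m, m = v ∨ m = μ ∨ m = ν) (hvμ : v ≠ μ) (hvν : v ≠ ν) (hμν : μ ≠ ν)
    (hodd : ∀ m, Odd (p m)) (h : IsTiling (∏ m, p m ^ 2) A B)
    (hB : Set.BijOn (residue p) (B.image (crt hp)) Set.univ) (hcard : A.card = ∏ m, p m)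
    (hD : DiagonalBoxes (A.image (crt hp)) x₀ I v) : SatisfiesT2 (∏ m, p m ^ 2) A := by
  refine satisfiesT2_of_forall_cycDvd dvd_rfl one_le_two hp hcard fun S hS =>
    cycDvd_of_forall_addChar hp le_rfl fun ψ hker => ?_
  simp only [ZMod.natCast_self, zero_dvd_iff] at hker
  have nontrivial {l : ι} (hl : l ∈ S) : ψ (Pi.single l (p l : ZMod (p l ^ 2))) ≠ 1 := fun h1 =>
    natCast_ne_zero_of_sq (p l) (by simpa only [Pi.single_eq_same] using (hker _).1 h1 l hl)
  have adapted : FiberAdapted ψ := by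
    intro l
    by_cases hl : l ∈ S
    · exact Or.inr (nontrivial hl)
    · exact Or.inl fun t => (hker _).2 fun m hm => by
        rw [Pi.single_eq_of_ne (ne_of_mem_of_not_mem hm hl)]
  obtain ⟨l, hl⟩ := hS
  rw [hD.sum_addChar_eq_sum_grid hcov (tiles_image_crt hp h) hp hB hvμ hvν hμν hodd adapted,
    sum_addChar_grid_eq_zero (nontrivial hl)]

end Transfer

section ThreePrimes

variable {p : Fin 3 → ℕ} [∀ m, Fact (p m).Prime] (hp : p.Injective)
  {Λ P : Set (ZMod (∏ m, p m ^ 2))} {A : Finset (ZMod (∏ m, p m ^ 2))}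
  {x x₀ : ZMod (∏ m, p m ^ 2)}

lemma IsBox.mem_of_forall_apply_mem
    (hP : IsBox (∏ m, p m ^ 2) (p 0 ^ 2) (p 1 ^ 2) (p 2 ^ 2) Λ P) (hx : x ∈ Λ)
    (hxP : ∀ m, crt hp x m ∈ (crt hp · m) '' P) : x ∈ P := by
  choose u hu hux using hxP
  exact hP.2 _ (hu 0) _ (hu 1) _ (hu 2) x hx ((natCast_sq_dvd_sub_iff hp 0).2 (hux 0).symm)
    ((natCast_sq_dvd_sub_iff hp 1).2 (hux 1).symm) ((natCast_sq_dvd_sub_iff hp 2).2 (hux 2).symm)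

lemma mem_compBox_iff : x ∈ compBox (∏ m, p m ^ 2) (p 0 ^ 2) (p 1 ^ 2) (p 2 ^ 2) Λ P ↔
    x ∈ Λ ∧ ∀ m, crt hp x m ∉ (crt hp · m) '' P := by
  rw [compBox, Set.mem_ofPred_eq]
  simp only [natCast_sq_dvd_sub_iff hp]
  refine and_congr_right fun _ => ⟨fun h m => ?_, fun h u hu => ?_⟩
  · rintro ⟨u, hu, hux⟩
    obtain ⟨h0, h1, h2⟩ := h u hu
    fin_cases m
    exacts [h0 hux.symm, h1 hux.symm, h2 hux.symm]
  · have ne (m : Fin 3) : crt hp x m ≠ crt hp u m := fun hux => h m ⟨u, hu, hux.symm⟩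
    exact ⟨ne 0, ne 1, ne 2⟩

lemma mem_iff_crt_mem_grid (hΛ : Λ = gridSet (∏ m, p m ^ 2) x₀ (∏ m, p m)) :
    x ∈ Λ ↔ crt hp x ∈ grid (crt hp x₀) := by
  rw [hΛ, gridSet_eq_preimage_grid hp, Set.mem_preimage, Finset.mem_coe]

variable {v μ ν : Fin 3} (hvμ : v ≠ μ) (hvν : v ≠ ν)
  (hΛ : Λ = gridSet (∏ m, p m ^ 2) x₀ (∏ m, p m))

include hvμ hvν hΛ

-- A witness in `P°` is obtained from any point of `P°` by giving it the `v`-coordinate of `x`.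
lemma mem_mixedBox_of_apply_notMem
    (hcne : (compBox (∏ m, p m ^ 2) (p 0 ^ 2) (p 1 ^ 2) (p 2 ^ 2) Λ P).Nonempty) (hx : x ∈ Λ)
    (hxv : crt hp x v ∉ (crt hp · v) '' P) (hxP : ∀ m ≠ v, crt hp x m ∈ (crt hp · m) '' P) :
    x ∈ mixedBox (∏ m, p m ^ 2) (p v ^ 2) (p μ ^ 2) (p ν ^ 2) Λ P
      (compBox (∏ m, p m ^ 2) (p 0 ^ 2) (p 1 ^ 2) (p 2 ^ 2) Λ P) := by
  have mem_slab (m : Fin 3) (hm : v ≠ m) :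
      ∃ w ∈ P, ((p m ^ 2 : ℕ) : ZMod (∏ m, p m ^ 2)) ∣ x - w := by
    obtain ⟨w, hw, hwx⟩ := hxP m hm.symm
    exact ⟨w, hw, (natCast_sq_dvd_sub_iff hp m).2 hwx.symm⟩
  obtain ⟨q, hq⟩ := hcne
  obtain ⟨hqΛ, hqP⟩ := (mem_compBox_iff hp).1 hq
  refine ⟨hx, ⟨(crt hp).symm (Function.update (crt hp q) v (crt hp x v)),
    (mem_compBox_iff hp).2 ⟨?_, fun m => ?_⟩, ?_⟩, mem_slab μ hvμ, mem_slab ν hvν⟩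
  · rw [mem_iff_crt_mem_grid hp hΛ] at hx hqΛ ⊢
    rw [RingEquiv.apply_symm_apply]
    exact update_mem_grid v hqΛ hx
  · rw [RingEquiv.apply_symm_apply]
    rcases eq_or_ne m v with rfl | hm
    · rwa [Function.update_self]
    · rw [Function.update_of_ne hm]
      exact hqP m
  · rw [natCast_sq_dvd_sub_iff hp, RingEquiv.apply_symm_apply, Function.update_self]

lemma diagonalBoxes_of_mixedBox_subset
    (hP : IsBox (∏ m, p m ^ 2) (p 0 ^ 2) (p 1 ^ 2) (p 2 ^ 2) Λ P) (hPne : P.Nonempty)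
    (hcne : (compBox (∏ m, p m ^ 2) (p 0 ^ 2) (p 1 ^ 2) (p 2 ^ 2) Λ P).Nonempty)
    (hPA : P ∪ compBox (∏ m, p m ^ 2) (p 0 ^ 2) (p 1 ^ 2) (p 2 ^ 2) Λ P ⊆ A)
    (hmixed : mixedBox (∏ m, p m ^ 2) (p v ^ 2) (p μ ^ 2) (p ν ^ 2) Λ P
      (compBox (∏ m, p m ^ 2) (p 0 ^ 2) (p 1 ^ 2) (p 2 ^ 2) Λ P) ⊆ A) :
    DiagonalBoxes (A.image (crt hp)) (crt hp x₀) (fun m => (crt hp · m) '' P) v where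
  slab y hy hyP := by
    obtain ⟨y, rfl⟩ := (crt hp).surjective y
    rw [← mem_iff_crt_mem_grid hp hΛ] at hy
    refine Finset.mem_image_of_mem _ ?_
    by_cases hv : crt hp y v ∈ (crt hp · v) '' P
    · refine hPA (Or.inl (hP.mem_of_forall_apply_mem hp hy fun m => ?_))
      rcases eq_or_ne m v with rfl | hm
      exacts [hv, hyP m hm]
    · exact hmixed (mem_mixedBox_of_apply_notMem hp hvμ hvν hΛ hcne hy hv hyP)
  compl y hy hyP := by
    obtain ⟨y, rfl⟩ := (crt hp).surjective y
    rw [← mem_iff_crt_mem_grid hp hΛ] at hy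
    exact Finset.mem_image_of_mem _ (hPA (Or.inr ((mem_compBox_iff hp).2 ⟨hy, hyP⟩)))
  exists_inner := by
    obtain ⟨u, hu⟩ := hPne
    exact ⟨crt hp u, (mem_iff_crt_mem_grid hp hΛ).1 (hP.1 hu), fun m => ⟨u, hu, rfl⟩⟩
  exists_outer := by
    obtain ⟨q, hq⟩ := hcne
    obtain ⟨hqΛ, hqP⟩ := (mem_compBox_iff hp).1 hq
    exact ⟨crt hp q, (mem_iff_crt_mem_grid hp hΛ).1 hqΛ, hqP⟩

include hp

theorem isTiling_and_satisfiesT2_of_mixedBox_subset {B : Finset (ZMod (∏ m, p m ^ 2))}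
    (hcov : ∀ m, m = v ∨ m = μ ∨ m = ν) (hμν : μ ≠ ν)
    (hodd : ∀ m, Odd (p m)) (h : IsTiling (∏ m, p m ^ 2) A B) (hcardB : B.card = ∏ m, p m)
    (hdiv : ∀ d, ∏ m, p m ∣ d → d ∣ ∏ m, p m ^ 2 →
      d ∈ DivSet (∏ m, p m ^ 2) (∏ m, p m ^ 2) A)
    (hP : IsBox (∏ m, p m ^ 2) (p 0 ^ 2) (p 1 ^ 2) (p 2 ^ 2) Λ P) (hPne : P.Nonempty)
    (hcne : (compBox (∏ m, p m ^ 2) (p 0 ^ 2) (p 1 ^ 2) (p 2 ^ 2) Λ P).Nonempty)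
    (hPA : P ∪ compBox (∏ m, p m ^ 2) (p 0 ^ 2) (p 1 ^ 2) (p 2 ^ 2) Λ P ⊆ A)
    (hmixed : mixedBox (∏ m, p m ^ 2) (p v ^ 2) (p μ ^ 2) (p ν ^ 2) Λ P
      (compBox (∏ m, p m ^ 2) (p 0 ^ 2) (p 1 ^ 2) (p 2 ^ 2) Λ P) ⊆ A) :
    IsTiling (∏ m, p m ^ 2) Λ B ∧ SatisfiesT2 (∏ m, p m ^ 2) A ∧
      SatisfiesT2 (∏ m, p m ^ 2) B := by
  have hB := bijOn_residue_of_forall_mem_divSet hp h hcardB hdiv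
  have hD := diagonalBoxes_of_mixedBox_subset hp hvμ hvν hΛ hP hPne hcne hPA hmixed
  refine ⟨hΛ ▸ isTiling_gridSet hp hB x₀, ?_, satisfiesT2_of_bijOn_residue hp hB hcardB⟩
  exact hD.satisfiesT2 hp hcov hvμ hvν hμν hodd h hB (h.card_left_eq hcardB)

end ThreePrimes

theorem statement14_general
    (pi pj pk : ℕ) (hpi : pi.Prime) (hpj : pj.Prime) (hpk : pk.Prime)
    (hoi : Odd pi) (hoj : Odd pj) (hok : Odd pk)
    (hij : pi ≠ pj) (hik : pi ≠ pk) (hjk : pj ≠ pk)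
    (M : ℕ) (hM : M = pi ^ 2 * pj ^ 2 * pk ^ 2)
    (A B : Finset (ZMod M))
    (htile : IsTiling M (A : Set (ZMod M)) (B : Set (ZMod M)))
    (hcardB : B.card = pi * pj * pk)
    (x0 : ZMod M) (Lam : Set (ZMod M)) (hLam : Lam = gridSet M x0 (pi * pj * pk))
    (hdiv : ∀ m : ℕ, (pi * pj * pk) ∣ m → m ∣ M → m ∈ DivSet M M (A : Set (ZMod M)))
    (P : Set (ZMod M))
    (hbox : IsBox M (pi ^ 2) (pj ^ 2) (pk ^ 2) Lam P)
    (hPne : P.Nonempty)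
    (Pc : Set (ZMod M)) (hPc : Pc = compBox M (pi ^ 2) (pj ^ 2) (pk ^ 2) Lam P)
    (hPcne : Pc.Nonempty)
    (hPA : P ∪ Pc ⊆ (A : Set (ZMod M)))
    (hmixed :
      mixedBox M (pi ^ 2) (pj ^ 2) (pk ^ 2) Lam P Pc ⊆ (A : Set (ZMod M)) ∨
      mixedBox M (pj ^ 2) (pi ^ 2) (pk ^ 2) Lam P Pc ⊆ (A : Set (ZMod M)) ∨
      mixedBox M (pk ^ 2) (pi ^ 2) (pj ^ 2) Lam P Pc ⊆ (A : Set (ZMod M))) :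
    IsTiling M Lam (B : Set (ZMod M)) ∧ SatisfiesT2 M A ∧ SatisfiesT2 M B := by
  let p : Fin 3 → ℕ := ![pi, pj, pk]
  have prime (m : Fin 3) : Fact (p m).Prime := ⟨by fin_cases m <;> assumption⟩
  have hodd (m : Fin 3) : Odd (p m) := by fin_cases m <;> assumption
  have hp : p.Injective := by
    simp [p, Function.Injective, Fin.forall_fin_succ, hij, hik, hjk, hij.symm, hik.symm, hjk.symm]
  obtain rfl : M = ∏ m, p m ^ 2 := by rw [hM, Fin.prod_univ_three]; rfl
  have prod_p : pi * pj * pk = ∏ m, p m := (Fin.prod_univ_three p).symm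
  rw [prod_p] at hcardB hLam hdiv
  subst hPc
  rcases hmixed with h | h | h
  · exact isTiling_and_satisfiesT2_of_mixedBox_subset (v := 0) (μ := 1) (ν := 2) hp (by decide)
      (by decide) hLam (by decide) (by decide) hodd htile hcardB hdiv hbox hPne hPcne hPA h
  · exact isTiling_and_satisfiesT2_of_mixedBox_subset (v := 1) (μ := 0) (ν := 2) hp (by decide)
      (by decide) hLam (by decide) (by decide) hodd htile hcardB hdiv hbox hPne hPcne hPA h
  · exact isTiling_and_satisfiesT2_of_mixedBox_subset (v := 2) (μ := 0) (ν := 1) hp (by decide)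
      (by decide) hLam (by decide) (by decide) hodd htile hcardB hdiv hbox hPne hPcne hPA h

/-- **Resolving diagonal boxes, nondegenerate case.** -/
theorem statement14
    (pi pj pk : ℕ) (hpi : pi.Prime) (hpj : pj.Prime) (hpk : pk.Prime)
    (hoi : Odd pi) (hoj : Odd pj) (hok : Odd pk)
    (hij : pi ≠ pj) (hik : pi ≠ pk) (hjk : pj ≠ pk)
    (M : ℕ) (hM : M = pi ^ 2 * pj ^ 2 * pk ^ 2)
    (A B : Finset (ZMod M))
    (htile : IsTiling M (A : Set (ZMod M)) (B : Set (ZMod M)))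
    (hcardA : A.card = pi * pj * pk) (hcardB : B.card = pi * pj * pk)
    (hPhiM : cycDvd M M A)
    (x0 : ZMod M) (Lam : Set (ZMod M)) (hLam : Lam = gridSet M x0 (pi * pj * pk))
    (hdiv : ∀ m : ℕ, (pi * pj * pk) ∣ m → m ∣ M →
      m ∈ DivSet M M ((A : Set (ZMod M)) ∩ Lam))
    (hnfi : ¬ Fibered M pi ((A : Set (ZMod M)) ∩ Lam))
    (hnfj : ¬ Fibered M pj ((A : Set (ZMod M)) ∩ Lam))
    (hnfk : ¬ Fibered M pk ((A : Set (ZMod M)) ∩ Lam))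
    (P : Set (ZMod M))
    (hbox : IsBox M (pi ^ 2) (pj ^ 2) (pk ^ 2) Lam P)
    (hPne : P.Nonempty)
    (Pc : Set (ZMod M)) (hPc : Pc = compBox M (pi ^ 2) (pj ^ 2) (pk ^ 2) Lam P)
    (hPcne : Pc.Nonempty)
    (hPA : P ∪ Pc ⊆ (A : Set (ZMod M)))
    (hmixed :
      mixedBox M (pi ^ 2) (pj ^ 2) (pk ^ 2) Lam P Pc ⊆ (A : Set (ZMod M)) ∨
      mixedBox M (pj ^ 2) (pi ^ 2) (pk ^ 2) Lam P Pc ⊆ (A : Set (ZMod M)) ∨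
      mixedBox M (pk ^ 2) (pi ^ 2) (pj ^ 2) Lam P Pc ⊆ (A : Set (ZMod M))) :
    IsTiling M Lam (B : Set (ZMod M)) ∧ SatisfiesT2 M A ∧ SatisfiesT2 M B :=
  statement14_general pi pj pk hpi hpj hpk hoi hoj hok hij hik hjk M hM A B htile hcardB x0 Lam hLam
    (fun m hm hmM => divSet_mono Set.inter_subset_left (hdiv m hm hmM)) P hbox hPne Pc hPc hPcne
    hPA hmixed
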